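/- arXiv:1812.10269 — 3 statements merged into one kernel-verified Lean document; each statement's English description precedes it below -/
import Mathlib

section
/- Let b ≥ 2 and let Z ⊆ ℝ^m × ℝ^n be a semi-algebraic set of complexity at most b. For each y ∈ ℝ^n define R_y = {x ∈ ℝ^m : (x,y) ∈ Z}. Then the range space (ℝ^m, {R_y : y ∈ ℝ^n}) has VC dimension at most 200·n²·log₂ b. -/
open MvPolynomial

/-- A set `S ⊆ ℝ^d` is semi-algebraic of complexity at most `b`: it is the locus of points
satisfying a Boolean formula with at most `b` atoms of the form `P(x) < 0` or `P(x) = 0`,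
where each `P` is a `d`-variate real polynomial of degree at most `b`. -/
def IsSemiAlgebraicOfComplexity (d b : ℕ) (S : Set (Fin d → ℝ)) : Prop :=
  ∃ (P : Fin b → MvPolynomial (Fin d) ℝ) (τ : Fin b → Bool) (φ : (Fin b → Prop) → Prop),
    (∀ i, (P i).totalDegree ≤ b) ∧
    S = {x | φ fun i => if τ i then eval x (P i) < 0 else eval x (P i) = 0}

/-- A finite set `A` is shattered by the range family `R`. -/
def Shatters {X : Type*} (R : Set (Set X)) (A : Finset X) : Prop :=
  ∀ B ⊆ A, ∃ r ∈ R, r ∩ ↑A = ↑B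

/-- The range space `(X, R)` has VC dimension at most `v`. -/
def VCDimLE {X : Type*} (R : Set (Set X)) (v : ℝ) : Prop :=
  ∀ A : Finset X, Shatters R A → (A.card : ℝ) ≤ v


lemma sa_reduce (n D : ℕ) (c : ℝ) (hc : c ≠ 0) (g : Fin n → MvPolynomial (Fin n) ℝ)
    (hg : ∀ i, (g i).totalDegree < D) (E : Finset (Fin n → ℝ))
    (hE : ∀ x ∈ E, ∀ i, c * x i ^ D = eval x (g i))
    (W : Submodule ℝ (E → ℝ))
    (hW : ∀ s : Fin n →₀ ℕ, (∀ i, s i < D) →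
      (fun e : E => eval e.1 (monomial s (1 : ℝ))) ∈ W) :
    ∀ t : ℕ, ∀ p : MvPolynomial (Fin n) ℝ, p.totalDegree ≤ t →
      (fun e : E => eval e.1 p) ∈ W := by
  intro t
  induction t using Nat.strong_induction_on with
  | _ t ih =>
  intro p hp
  have key : ∀ s ∈ p.support, (fun e : E => eval e.1 (monomial s (1 : ℝ))) ∈ W := by
    intro s hs
    have hst : (s.sum fun _ e => e) ≤ t := (le_totalDegree hs).trans hp
    by_cases h : ∀ i, s i < D
    · exact hW s h
    · push Not at h
      obtain ⟨i, hi⟩ := h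
      set s' := s - Finsupp.single i D with hs'
      have hss : s = s' + Finsupp.single i D := by
        ext j
        by_cases hj : i = j
        · subst hj; simp [hs']; omega
        · simp [hs', hj]
      have hdeg : (s.sum fun _ e => e) = (s'.sum fun _ e => e) + D := by
        rw [hss, Finsupp.sum_add_index' (by simp) (by simp)]
        simp
      have hq : (monomial s' (c⁻¹) * g i).totalDegree < t := by
        have h1 := totalDegree_mul (monomial s' (c⁻¹)) (g i)
        have h2 := totalDegree_monomial s' (inv_ne_zero hc)
        have h3 := hg i
        omega
      have := ih _ hq (monomial s' (c⁻¹) * g i) le_rfl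
      convert this using 1
      funext e
      have h4 := hE e.1 e.2 i
      have h5 : (monomial s (1 : ℝ)) = monomial s' 1 * X i ^ D := by
        rw [hss, X_pow_eq_monomial, monomial_mul]; simp
      have h6 : monomial s' c⁻¹ = C c⁻¹ * monomial s' (1 : ℝ) := by
        rw [C_mul_monomial]; simp
      rw [h5, h6]
      simp only [map_mul, eval_C, map_pow, eval_X]
      rw [← h4]
      field_simp
  have hsum : (fun e : E => eval e.1 p) =
      ∑ s ∈ p.support, p.coeff s • (fun e : E => eval e.1 (monomial s (1 : ℝ))) := by
    funext e
    conv_lhs => rw [p.as_sum]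
    simp only [map_sum, Finset.sum_apply, Pi.smul_apply, smul_eq_mul, eval_monomial, one_mul]
  rw [hsum]
  exact Submodule.sum_mem _ fun s hs => Submodule.smul_mem _ _ (key s hs)

lemma sa_interp (n : ℕ) (E : Finset (Fin n → ℝ)) (e : E) :
    ∃ p : MvPolynomial (Fin n) ℝ, ∀ e' : E, eval e'.1 p = if e' = e then 1 else 0 := by
  classical
  have h : ∀ f : E, ∃ q : MvPolynomial (Fin n) ℝ, f ≠ e → (eval e.1 q = 1 ∧ eval f.1 q = 0) := by
    intro f
    by_cases hf : f = e
    · exact ⟨0, fun h => absurd hf h⟩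
    · have : f.1 ≠ e.1 := fun h => hf (Subtype.ext h)
      obtain ⟨j, hj⟩ := Function.ne_iff.1 this
      refine ⟨C ((e.1 j - f.1 j)⁻¹) * (X j - C (f.1 j)), fun _ => ⟨?_, ?_⟩⟩
      · have : e.1 j - f.1 j ≠ 0 := sub_ne_zero.2 (Ne.symm hj)
        simp [this]
      · simp
  choose q hq using h
  refine ⟨∏ f ∈ Finset.univ.erase e, q f, fun e' => ?_⟩
  rw [map_prod]
  split_ifs with h
  · subst h
    exact Finset.prod_eq_one fun f hf => (hq f (Finset.ne_of_mem_erase hf)).1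
  · exact Finset.prod_eq_zero (Finset.mem_erase.2 ⟨h, Finset.mem_univ _⟩) (hq e' h).2

lemma sa_count (n D : ℕ) (c : ℝ) (hc : c ≠ 0) (g : Fin n → MvPolynomial (Fin n) ℝ)
    (hg : ∀ i, (g i).totalDegree < D) (E : Finset (Fin n → ℝ))
    (hE : ∀ x ∈ E, ∀ i, c * x i ^ D = eval x (g i)) : E.card ≤ D ^ n := by
  classical
  set b : (Fin n → Fin D) → (E → ℝ) := fun s e =>
    eval e.1 (monomial (Finsupp.equivFunOnFinite.symm (fun i => (s i : ℕ))) (1 : ℝ)) with hb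
  have hW := sa_reduce n D c hc g hg E hE (Submodule.span ℝ (Set.range b)) (by
    intro s hs
    apply Submodule.subset_span
    refine ⟨fun i => ⟨s i, hs i⟩, ?_⟩
    funext e
    simp only [hb]
    have hse : (Finsupp.equivFunOnFinite.symm fun i => s i) = s := by ext i; simp
    rw [hse])
  have htop : Submodule.span ℝ (Set.range b) = ⊤ := by
    rw [eq_top_iff]
    intro v _
    have : v = ∑ e : E, v e • (Pi.single e (1 : ℝ) : E → ℝ) := by
      funext e'
      simp [Finset.sum_apply, Pi.single_apply]
    rw [this]
    refine Submodule.sum_mem _ fun e _ => Submodule.smul_mem _ _ ?_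
    obtain ⟨p, hp⟩ := sa_interp n E e
    have := hW _ p le_rfl
    convert this using 1
    funext e'
    rw [hp, Pi.single_apply]
  have h1 := finrank_range_le_card (R := ℝ) b
  rw [Set.finrank, htop, finrank_top] at h1
  simpa using h1

lemma sa_growth (n : ℕ) (p : MvPolynomial (Fin n) ℝ) (D : ℕ) (hD : p.totalDegree ≤ D) :
    ∃ K : ℝ, ∀ x : Fin n → ℝ, 1 ≤ ‖x‖ → eval x p ≤ K * ‖x‖ ^ D := by
  refine ⟨∑ s ∈ p.support, |p.coeff s|, fun x hx => ?_⟩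
  rw [eval_eq, Finset.sum_mul]
  refine Finset.sum_le_sum fun s hs => (le_abs_self _).trans ?_
  rw [abs_mul, Finset.abs_prod]
  refine mul_le_mul_of_nonneg_left ?_ (abs_nonneg _)
  have h1 : ∏ i ∈ s.support, |x i ^ s i| ≤ ∏ i ∈ s.support, ‖x‖ ^ s i := by
    refine Finset.prod_le_prod (fun _ _ => abs_nonneg _) fun i _ => ?_
    rw [abs_pow]
    exact pow_le_pow_left₀ (abs_nonneg _) (norm_le_pi_norm x i) _
  refine h1.trans ?_
  rw [Finset.prod_pow_eq_pow_sum]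
  exact pow_le_pow_right₀ hx ((le_totalDegree hs).trans hD)

lemma sa_pderiv_deg (n : ℕ) (p : MvPolynomial (Fin n) ℝ) (i : Fin n) :
    (pderiv i p).totalDegree ≤ p.totalDegree := by
  conv_lhs => rw [p.as_sum]
  rw [map_sum]
  refine totalDegree_finsetSum_le fun s hs => ?_
  rw [pderiv_monomial]
  refine (totalDegree_monomial_le _ _).trans (le_trans ?_ (le_totalDegree hs))
  rw [Finsupp.sum_fintype _ _ (by simp), Finsupp.sum_fintype _ _ (by simp)]
  exact Finset.sum_le_sum fun j _ => by simp

lemma sa_deriv (n : ℕ) (p : MvPolynomial (Fin n) ℝ) (x : Fin n → ℝ) (i : Fin n) :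
    HasDerivAt (fun t : ℝ => eval (Function.update x i t) p) (eval x (pderiv i p)) (x i) := by
  induction p using MvPolynomial.induction_on with
  | C a => simpa using hasDerivAt_const (x i) a
  | add p q hp hq =>
    rw [map_add, map_add]
    refine (hp.add hq).congr_of_eventuallyEq (Filter.Eventually.of_forall fun t => ?_)
    simp
  | mul_X p j hp =>
    have hX : HasDerivAt (fun t : ℝ => eval (Function.update x i t) (X j : MvPolynomial (Fin n) ℝ))
        (eval x (pderiv i (X j : MvPolynomial (Fin n) ℝ))) (x i) := by
      by_cases h : j = i
      · subst h; simp only [eval_X, Function.update_self, pderiv_X_self, map_one]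
        exact hasDerivAt_id' (x j)
      · simpa [pderiv_X_of_ne h, Function.update_of_ne h] using hasDerivAt_const (x i) (x j)
    have := hp.mul hX
    simp only [Function.update_eq_self] at this
    rw [pderiv_mul, map_add, map_mul, map_mul]
    refine this.congr_of_eventuallyEq (Filter.Eventually.of_forall fun t => ?_)
    simp

lemma sa_patterns (n : ℕ) {ι : Type*} [Fintype ι] (f : ι → MvPolynomial (Fin n) ℝ) (D : ℕ)
    (hD : (∏ i, f i ^ 2).totalDegree < D) (hodd : Even (D + 1))
    (V : Finset (Fin n → ℝ)) (hV : ∀ v ∈ V, ∀ i, eval v (f i) ≠ 0)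
    (hinj : ∀ v ∈ V, ∀ w ∈ V, (∀ i, eval v (f i) < 0 ↔ eval w (f i) < 0) → v = w) :
    V.card ≤ D ^ n := by
  classical
  set Q := ∏ i, f i ^ 2 with hQ
  have hQe : ∀ x, eval x Q = ∏ i, (eval x (f i)) ^ 2 := fun x => by simp [hQ, map_prod]
  have hQpos : ∀ v ∈ V, 0 < eval v Q := fun v hv => by
    rw [hQe]
    exact Finset.prod_pos fun i _ => by have := hV v hv i; positivity
  have hS0 : ∀ x : Fin n → ℝ, 0 ≤ ∑ j, x j ^ (D + 1) := fun x =>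
    Finset.sum_nonneg fun j _ => hodd.pow_nonneg _
  obtain ⟨ε, hε, hεV⟩ : ∃ ε : ℝ, 0 < ε ∧ ∀ v ∈ V, ε * ∑ j, v j ^ (D + 1) < eval v Q := by
    have : ∀ᶠ ε : ℝ in nhdsWithin 0 (Set.Ioi 0), ∀ v ∈ V, ε * ∑ j, v j ^ (D + 1) < eval v Q := by
      rw [Filter.eventually_all_finset]
      intro v hv
      have hc : Filter.Tendsto (fun ε : ℝ => ε * ∑ j, v j ^ (D + 1)) (nhdsWithin 0 (Set.Ioi 0))
          (nhds (0 * ∑ j, v j ^ (D + 1))) :=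
        ((continuous_id.mul continuous_const).tendsto 0).mono_left nhdsWithin_le_nhds
      rw [zero_mul] at hc
      exact hc.eventually (gt_mem_nhds (hQpos v hv))
    obtain ⟨ε, h1, h2⟩ := (this.and self_mem_nhdsWithin).exists
    exact ⟨ε, h2, h1⟩
  set Φ : MvPolynomial (Fin n) ℝ := Q - C ε * ∑ j, X j ^ (D + 1) with hΦ
  have hΦe : ∀ x, eval x Φ = eval x Q - ε * ∑ j, x j ^ (D + 1) := fun x => by
    simp [hΦ, map_sum]
  have hdec : ∀ᶠ x in Filter.cocompact (Fin n → ℝ), eval x Φ ≤ 0 := by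
    obtain ⟨K, hK⟩ := sa_growth n Q D hD.le
    filter_upwards [(tendsto_norm_cocompact_atTop (E := Fin n → ℝ)).eventually_ge_atTop (max 1 (K / ε))]
      with x hx
    have hx1 : 1 ≤ ‖x‖ := (le_max_left _ _).trans hx
    have hx2 : K ≤ ε * ‖x‖ := by
      have := (le_max_right _ _).trans hx
      rw [div_le_iff₀ hε] at this; linarith
    have h1 := hK x hx1
    have h2 : K * ‖x‖ ^ D ≤ ε * ‖x‖ ^ (D + 1) := by
      rw [pow_succ']
      have := mul_le_mul_of_nonneg_right hx2 (pow_nonneg (norm_nonneg x) D)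
      linarith
    have h3 : ‖x‖ ^ (D + 1) ≤ ∑ j, x j ^ (D + 1) := by
      have hne : (Finset.univ : Finset (Fin n)).Nonempty := by
        rw [Finset.univ_nonempty_iff]
        by_contra hemp
        rw [not_nonempty_iff] at hemp
        have : ‖x‖ = 0 := by rw [Subsingleton.elim x 0, norm_zero]
        linarith
      obtain ⟨j, -, hj⟩ := Finset.exists_max_image Finset.univ (fun j => ‖x j‖) hne
      have hn : ‖x‖ ≤ ‖x j‖ := (pi_norm_le_iff_of_nonneg (norm_nonneg _)).2 fun i => hj i (Finset.mem_univ _)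
      calc ‖x‖ ^ (D + 1) ≤ ‖x j‖ ^ (D + 1) := pow_le_pow_left₀ (norm_nonneg _) hn _
        _ = x j ^ (D + 1) := by rw [Real.norm_eq_abs, hodd.pow_abs]
        _ ≤ _ := Finset.single_le_sum (f := fun j => x j ^ (D + 1))
            (fun j _ => hodd.pow_nonneg _) (Finset.mem_univ j)
    rw [hΦe]
    have := mul_le_mul_of_nonneg_left h3 hε.le
    linarith
  have hcrit : ∀ v : V, ∃ x : Fin n → ℝ, (∀ i, 0 < eval x (f i) * eval v.1 (f i)) ∧
      ∀ i, (ε * (D + 1)) * x i ^ D = eval x (pderiv i Q) := by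
    rintro ⟨v, hv⟩
    set s : Set (Fin n → ℝ) := {x | ∀ i, 0 ≤ eval x (f i) * eval v (f i)} with hs
    have hsc : IsClosed s := by
      rw [hs, Set.ofPred_forall]
      exact isClosed_iInter fun i => isClosed_le continuous_const
        ((MvPolynomial.continuous_eval _).mul continuous_const)
    have hvs : v ∈ s := fun i => mul_self_nonneg _
    have hΦv : 0 < eval v Φ := by rw [hΦe]; linarith [hεV v hv]
    obtain ⟨x, hxs, hmax⟩ := (MvPolynomial.continuous_eval Φ).continuousOn.exists_isMaxOn' hsc hvs
      (Filter.Eventually.filter_mono inf_le_left (hdec.mono fun x hx => hx.trans hΦv.le))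
    have hΦx : 0 < eval x Φ := lt_of_lt_of_le hΦv (hmax hvs)
    have hQx : eval x Q ≠ 0 := by
      have := mul_nonneg hε.le (hS0 x)
      rw [hΦe] at hΦx
      exact ne_of_gt (by linarith)
    have hfx : ∀ i, eval x (f i) ≠ 0 := by
      intro i hi
      apply hQx
      rw [hQe]
      exact Finset.prod_eq_zero (Finset.mem_univ i) (by rw [hi]; simp)
    have hpos : ∀ i, 0 < eval x (f i) * eval v (f i) := fun i =>
      lt_of_le_of_ne (hxs i) (mul_ne_zero (hfx i) (hV v hv i)).symm
    refine ⟨x, hpos, fun i => ?_⟩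
    have hnhds : s ∈ nhds x := by
      have : ∀ᶠ y in nhds x, ∀ i, 0 < eval y (f i) * eval v (f i) := by
        rw [Filter.eventually_all]
        intro i
        exact (((MvPolynomial.continuous_eval (f i)).mul continuous_const).tendsto x).eventually
          (lt_mem_nhds (hpos i))
      exact this.mono fun y hy i => (hy i).le
    have hloc : IsLocalMax (fun y => eval y Φ) x := hmax.isLocalMax hnhds
    have hlin : IsLocalMax (fun t : ℝ => eval (Function.update x i t) Φ) (x i) := by
      have hc : Filter.Tendsto (fun t : ℝ => Function.update x i t) (nhds (x i)) (nhds x) := by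
        have : Continuous (fun t : ℝ => Function.update x i t) :=
          continuous_const.update i continuous_id
        simpa using this.tendsto (x i)
      have := hc.eventually hloc
      unfold IsLocalMax IsMaxFilter
      simpa using this
    have hd := hlin.hasDerivAt_eq_zero (sa_deriv n Φ x i)
    have hp : pderiv i Φ = pderiv i Q - C ε * (((D + 1 : ℕ) : MvPolynomial (Fin n) ℝ) * X i ^ D) := by
      rw [hΦ, map_sub, pderiv_C_mul, map_sum, Finset.sum_eq_single i]
      · rw [pderiv_pow]; simp
      · intro j _ hj; rw [pderiv_pow, pderiv_X_of_ne hj, mul_zero]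
      · simp
    rw [hp] at hd
    simp at hd
    linarith
  choose x hx1 hx2 using hcrit
  have hxinj : Function.Injective x := by
    intro v w hvw
    apply Subtype.ext
    refine hinj _ v.2 _ w.2 fun i => ?_
    have a := hx1 v i
    have c := hx1 w i
    rw [hvw] at a
    rcases mul_pos_iff.1 a with ⟨a1, a2⟩ | ⟨a1, a2⟩ <;> rcases mul_pos_iff.1 c with ⟨c1, c2⟩ | ⟨c1, c2⟩ <;>
      constructor <;> intro <;> linarith
  have := sa_count n D (ε * (D + 1)) (by positivity) (fun i => pderiv i Q)
    (fun i => (sa_pderiv_deg n Q i).trans_lt hD) (Finset.univ.image x) (by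
      intro y hy i
      obtain ⟨v, -, rfl⟩ := Finset.mem_image.1 hy
      exact hx2 v i)
  rw [Finset.card_image_of_injective _ hxinj] at this
  simpa using this

lemma sa_subst_deg {σ : Type*} (n : ℕ) (h : σ → MvPolynomial (Fin n) ℝ)
    (hh : ∀ j, (h j).totalDegree ≤ 1) (p : MvPolynomial σ ℝ) :
    (aeval h p).totalDegree ≤ p.totalDegree := by
  rw [aeval_def, eval₂_eq]
  refine totalDegree_finsetSum_le fun s hs => ?_
  refine (totalDegree_mul _ _).trans ?_
  have h1 : (algebraMap ℝ (MvPolynomial (Fin n) ℝ) (p.coeff s)).totalDegree = 0 :=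
    totalDegree_C _
  rw [h1, zero_add]
  refine (totalDegree_finsetProd _ _).trans (le_trans ?_ (le_totalDegree hs))
  refine Finset.sum_le_sum fun j _ => (totalDegree_pow _ _).trans ?_
  have := Nat.mul_le_mul_left (s j) (hh j)
  simpa using this

lemma sa_arith (k n b : ℕ) (hb : 2 ≤ b) (h : 2 ^ k ≤ (k * b * (4 * b) + 1) ^ n) :
    (k : ℝ) ≤ 200 * (n : ℝ) ^ 2 * Real.logb 2 (b : ℝ) := by
  have hbR : (2 : ℝ) ≤ b := by exact_mod_cast hb
  have hL : 1 ≤ Real.logb 2 (b : ℝ) := by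
    rw [Real.le_logb_iff_rpow_le (by norm_num) (by linarith)]
    simpa using hbR
  set L := Real.logb 2 (b : ℝ) with hLdef
  rcases Nat.eq_zero_or_pos k with rfl | hk
  · simp only [Nat.cast_zero]; positivity
  rcases Nat.eq_zero_or_pos n with rfl | hn
  · simp only [pow_zero] at h
    have := Nat.one_lt_two_pow (n := k) (by omega)
    omega
  have hkR : (1 : ℝ) ≤ k := by exact_mod_cast hk
  have hnR : (1 : ℝ) ≤ n := by exact_mod_cast hn
  have h' : (2 : ℝ) ^ k ≤ (8 * k * (b : ℝ) ^ 2) ^ n := by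
    have h0 : (2 : ℝ) ^ k ≤ ((k : ℝ) * b * (4 * b) + 1) ^ n := by exact_mod_cast h
    refine h0.trans (pow_le_pow_left₀ (by positivity) ?_ _)
    have : (1 : ℝ) ≤ k * (b : ℝ) ^ 2 := by nlinarith
    nlinarith
  have h2 := Real.logb_le_logb_of_le (b := 2) (by norm_num) (by positivity) h'
  rw [Real.logb_pow, Real.logb_pow, Real.logb_mul (by positivity) (by positivity),
    Real.logb_mul (by positivity) (by positivity), Real.logb_pow, Real.logb_self_eq_one (by norm_num)] at h2
  have h8 : Real.logb 2 8 = 3 := by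
    rw [show (8 : ℝ) = 2 ^ (3 : ℕ) by norm_num, Real.logb_pow, Real.logb_self_eq_one (by norm_num)]
    norm_num
  set r := Real.sqrt k with hr
  have hrk : r ^ 2 = k := Real.sq_sqrt (by positivity)
  have hr1 : 1 ≤ r := Real.one_le_sqrt.2 hkR
  have hlogk : Real.logb 2 k ≤ 3 * r := by
    rw [← hrk, Real.logb_pow, Real.logb]
    have h3 := Real.log_le_sub_one_of_pos (show 0 < r by linarith)
    have h4 := Real.log_two_gt_d9
    have : Real.log r / Real.log 2 ≤ 3 / 2 * r := by
      rw [div_le_iff₀ (by linarith)]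
      nlinarith
    push_cast
    linarith
  rw [h8, ← hLdef] at h2
  push_cast at h2
  by_contra hcon
  push Not at hcon
  have h5 : (k : ℝ) ≤ n * (3 * r + 5 * L) := by
    refine le_trans (by linarith) (mul_le_mul_of_nonneg_left (show 3 + Real.logb 2 k + 2 * L ≤ 3 * r + 5 * L by linarith) (by linarith))
  have h6 : 14 * (n : ℝ) ≤ r := by
    apply Real.le_sqrt_of_sq_le
    nlinarith [sq_nonneg (n : ℝ)]
  have h7 : 14 * (n * r) ≤ k := by rw [← hrk]; nlinarith
  have h9 : n * L * 200 ≤ (k : ℝ) := by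
    have : (n : ℝ) * L ≤ (n : ℝ) ^ 2 * L := by
      apply mul_le_mul_of_nonneg_right _ (by linarith)
      nlinarith
    linarith
  nlinarith

/-- If `Z ⊆ ℝ^m × ℝ^n` is a semi-algebraic set of complexity at most `b ≥ 2`, then the range
space on `ℝ^m` whose ranges are the fibers `R_y = {x : (x,y) ∈ Z}`, `y ∈ ℝ^n`, has VC dimension
at most `200·n²·log₂ b`. -/
theorem vcDim_semialgebraic_ranges (m n b : ℕ) (hb : 2 ≤ b)
    (Z : Set (Fin (m + n) → ℝ)) (hZ : IsSemiAlgebraicOfComplexity (m + n) b Z) :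
    VCDimLE {r : Set (Fin m → ℝ) | ∃ y : Fin n → ℝ,
        r = {x : Fin m → ℝ | Fin.append x y ∈ Z}}
      (200 * (n : ℝ) ^ 2 * Real.logb 2 (b : ℝ)) := by
  classical
  obtain ⟨P, τ, φ, hP, rfl⟩ := hZ
  intro A hA
  have hA' : ∀ B : Finset (Fin m → ℝ), ∃ y : Fin n → ℝ, B ⊆ A → ∀ a ∈ A,
      (a ∈ B ↔ φ fun i => if τ i then eval (Fin.append a y) (P i) < 0
        else eval (Fin.append a y) (P i) = 0) := by
    intro B
    by_cases hB : B ⊆ A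
    · obtain ⟨r, ⟨y, rfl⟩, hr⟩ := hA B hB
      refine ⟨y, fun _ a ha => ?_⟩
      have := Set.ext_iff.1 hr a
      simp only [Set.mem_inter_iff, Finset.mem_coe, ha, and_true] at this
      exact this.symm
    · exact ⟨0, fun h => absurd h hB⟩
  choose Y hY using hA'
  set F : A × Fin b → MvPolynomial (Fin n) ℝ := fun q =>
    aeval (Fin.append (fun j => C (q.1.1 j)) (fun j => X j) :
      Fin (m + n) → MvPolynomial (Fin n) ℝ) (P q.2) with hF
  have hFdeg : ∀ q, (F q).totalDegree ≤ b := fun q => by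
    refine (sa_subst_deg n _ ?_ _).trans (hP q.2)
    intro j
    refine Fin.addCases (fun j => ?_) (fun j => ?_) j
    · simp
    · simp
  have hFe : ∀ q y, eval y (F q) = eval (Fin.append q.1.1 y) (P q.2) := by
    intro q y
    simp only [hF]
    rw [← coe_aeval_eq_eval, ← coe_aeval_eq_eval]
    simp only [RingHom.coe_coe]
    rw [← AlgHom.comp_apply, comp_aeval]
    congr 2
    funext j
    refine Fin.addCases (fun j => ?_) (fun j => ?_) j
    · simp
    · simp
  obtain ⟨δ, hδ, hδF⟩ : ∃ δ : ℝ, 0 < δ ∧ ∀ B ∈ A.powerset, ∀ q,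
      eval (Y B) (F q) ≠ 0 → δ < |eval (Y B) (F q)| := by
    have : ∀ᶠ δ : ℝ in nhdsWithin 0 (Set.Ioi 0), ∀ B ∈ A.powerset, ∀ q,
        eval (Y B) (F q) ≠ 0 → δ < |eval (Y B) (F q)| := by
      rw [Filter.eventually_all_finset]
      intro B _
      rw [Filter.eventually_all]
      intro q
      by_cases h0 : eval (Y B) (F q) = 0
      · exact Filter.Eventually.of_forall fun _ h => absurd h0 h
      · have : ∀ᶠ δ : ℝ in nhds 0, δ < |eval (Y B) (F q)| := gt_mem_nhds (abs_pos.2 h0)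
        exact (this.filter_mono nhdsWithin_le_nhds).mono fun _ h _ => h
    obtain ⟨δ, h1, h2⟩ := (this.and self_mem_nhdsWithin).exists
    exact ⟨δ, h2, h1⟩
  set G : A × Fin b → MvPolynomial (Fin n) ℝ := fun q =>
    if τ q.2 then F q + C δ else F q ^ 2 - C (δ ^ 2) with hG
  have hGdeg : ∀ q, (G q).totalDegree ≤ 2 * b := by
    intro q
    have h1 := hFdeg q
    simp only [hG]
    split_ifs
    · refine (totalDegree_add _ _).trans ?_
      rw [totalDegree_C]; simp; omega
    · refine (totalDegree_sub_C_le _ _).trans ((totalDegree_pow _ _).trans ?_)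
      omega
  have hGs : ∀ B ∈ A.powerset, ∀ q, eval (Y B) (G q) ≠ 0 ∧ (eval (Y B) (G q) < 0 ↔
      (if τ q.2 then eval (Y B) (F q) < 0 else eval (Y B) (F q) = 0)) := by
    intro B hB q
    have h1 := hδF B hB q
    generalize hz : eval (Y B) (F q) = z at h1
    by_cases ht : τ q.2
    · simp only [hG, ht, if_true, map_add, eval_C, hz]
      rcases lt_trichotomy z 0 with h | h | h
      · have h2 := h1 h.ne
        rw [abs_of_neg h] at h2
        exact ⟨by linarith, by constructor <;> intro <;> linarith⟩
      · subst h; exact ⟨by linarith, by constructor <;> intro <;> linarith⟩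
      · exact ⟨by linarith, by constructor <;> intro <;> linarith⟩
    · simp only [hG, ht, if_false, map_sub, map_pow, eval_C, hz, Bool.false_eq_true]
      by_cases h : z = 0
      · subst h
        have : 0 < δ ^ 2 := by positivity
        exact ⟨by simp; linarith, by simp; linarith⟩
      · have h2 := h1 h
        have h3 : δ ^ 2 < z ^ 2 := by
          rw [← sq_abs z]; exact pow_lt_pow_left₀ h2 hδ.le (by norm_num)
        exact ⟨by linarith, by constructor <;> intro h4 <;> first | linarith | exact absurd h4 h⟩
  have hsep : ∀ B ∈ A.powerset, ∀ B' ∈ A.powerset,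
      (∀ q, eval (Y B) (G q) < 0 ↔ eval (Y B') (G q) < 0) → B = B' := by
    intro B hB B' hB' h
    have hBA := Finset.mem_powerset.1 hB
    have hBA' := Finset.mem_powerset.1 hB'
    have key : ∀ a ∈ A, (a ∈ B ↔ a ∈ B') := by
      intro a ha
      rw [hY B hBA a ha, hY B' hBA' a ha]
      have : (fun i => if τ i then eval (Fin.append a (Y B)) (P i) < 0
          else eval (Fin.append a (Y B)) (P i) = 0) =
          (fun i => if τ i then eval (Fin.append a (Y B')) (P i) < 0
          else eval (Fin.append a (Y B')) (P i) = 0) := by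
        funext i
        have h1 := (hGs B hB (⟨a, ha⟩, i)).2
        have h2 := (hGs B' hB' (⟨a, ha⟩, i)).2
        have h3 := h (⟨a, ha⟩, i)
        rw [hFe] at h1 h2
        exact propext (h1.symm.trans (h3.trans h2))
      rw [this]
    ext a
    constructor
    · intro h; exact (key a (hBA h)).1 h
    · intro h; exact (key a (hBA' h)).2 h
  have hdeg : (∏ q, G q ^ 2).totalDegree < A.card * b * (4 * b) + 1 := by
    refine Nat.lt_succ_of_le ((totalDegree_finsetProd _ _).trans ?_)
    refine (Finset.sum_le_card_nsmul _ _ (4 * b) fun q _ => ?_).trans ?_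
    · refine (totalDegree_pow _ _).trans ?_
      have := hGdeg q
      omega
    · simp
  have hcard := sa_patterns n G _ hdeg ⟨A.card * b * (2 * b) + 1, by ring⟩ (A.powerset.image Y)
    (by
      intro v hv q
      obtain ⟨B, hB, rfl⟩ := Finset.mem_image.1 hv
      exact (hGs B hB q).1)
    (by
      intro v hv w hw h
      obtain ⟨B, hB, rfl⟩ := Finset.mem_image.1 hv
      obtain ⟨B', hB', rfl⟩ := Finset.mem_image.1 hw
      rw [hsep B hB B' hB' h])
  rw [Finset.card_image_of_injOn (by
    intro B hB B' hB' h
    exact hsep B hB B' hB' (fun q => by rw [h])), Finset.card_powerset] at hcard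
  exact sa_arith _ n b hb hcard
end

section
/- Let b ≥ 1 and let Z ⊆ ℝ^m × ℝ^n be a semi-algebraic set defined by a Boolean formula in polynomials f_1,…,f_b ∈ ℝ[x_1,…,x_m,y_1,…,y_n], each of degree at most b. For each y ∈ ℝ^n define R_y = {x ∈ ℝ^m : (x,y) ∈ Z}. Then for every positive integer z and every choice of points p_1,…,p_z ∈ ℝ^m, the number of distinct sets of the form R_y ∩ {p_1,…,p_z}, over all y ∈ ℝ^n, is at most (50·b²·z)^n. -/
open MvPolynomial

theorem wb_count {n k : ℕ} (q : Fin n → MvPolynomial (Fin n) ℝ)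
    (hq : ∀ i, (q i).totalDegree < k) (S : Finset (Fin n → ℝ))
    (hS : ∀ s ∈ S, ∀ i, s i ^ k = eval s (q i)) : S.card ≤ k ^ n := by
  classical
  set b : (Fin n → Fin k) → (S → ℝ) := fun e s => ∏ i, s.1 i ^ (e i : ℕ) with hb
  set V := Submodule.span ℝ (Set.range b) with hV
  have hmon : ∀ N : ℕ, ∀ m : Fin n →₀ ℕ, m.degree = N →
      (fun s : S => ∏ i, s.1 i ^ (m i)) ∈ V := by
    intro N
    induction N using Nat.strong_induction_on with
    | _ N ih =>
      intro m hm
      by_cases h : ∀ i, m i < k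
      · exact Submodule.subset_span ⟨fun i => ⟨m i, h i⟩, rfl⟩
      · push Not at h
        obtain ⟨i, hi⟩ := h
        obtain ⟨m', rfl⟩ : ∃ m', m = Finsupp.single i k + m' := by
          refine ⟨m - Finsupp.single i k, ?_⟩
          rw [add_tsub_cancel_of_le]
          exact Finsupp.single_le_iff.2 hi
        rw [map_add, Finsupp.degree_single] at hm
        have e : (fun s : S => ∏ j, s.1 j ^ ((Finsupp.single i k + m') j)) =
            ∑ u ∈ (q i).support, (q i).coeff u • (fun s : S => ∏ j, s.1 j ^ ((u + m') j)) := by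
          funext s
          have h1 := hS s.1 s.2 i
          rw [eval_eq'] at h1
          simp only [Finsupp.add_apply, pow_add, Finset.prod_mul_distrib, Finset.sum_apply,
            Pi.smul_apply, smul_eq_mul]
          have h2 : ∏ j, s.1 j ^ (Finsupp.single i k j) = s.1 i ^ k := by
            rw [Finset.prod_eq_single i]
            · simp
            · intro j _ hj
              simp [hj.symm]
            · simp
          rw [h2, h1, Finset.sum_mul]
          exact Finset.sum_congr rfl fun u _ => by ring
        rw [e]
        refine Submodule.sum_mem _ fun u hu => Submodule.smul_mem _ _ ?_
        refine ih _ ?_ (u + m') rfl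
        have h3 : u.degree ≤ (q i).totalDegree := le_totalDegree hu
        have h4 := hq i
        rw [map_add]
        omega
  have hpoly : ∀ p : MvPolynomial (Fin n) ℝ, (fun s : S => eval s.1 p) ∈ V := by
    intro p
    have e : (fun s : S => eval s.1 p) =
        ∑ u ∈ p.support, p.coeff u • (fun s : S => ∏ j, s.1 j ^ (u j)) := by
      funext s
      simp [eval_eq', Finset.sum_apply]
    rw [e]
    exact Submodule.sum_mem _ fun u _ => Submodule.smul_mem _ _ (hmon _ u rfl)
  have htop : V = ⊤ := by
    rw [eq_top_iff]
    intro g _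
    set L : S → MvPolynomial (Fin n) ℝ := fun a =>
      ∏ c ∈ Finset.univ.erase a, ∑ i, (X i - C (c.1 i)) ^ 2 with hL
    have hL0 : ∀ a c : S, c ≠ a → eval c.1 (L a) = 0 := by
      intro a c hca
      rw [hL, map_prod]
      apply Finset.prod_eq_zero (i := c) (by simp [hca])
      simp
    have hL1 : ∀ a : S, eval a.1 (L a) ≠ 0 := by
      intro a
      rw [hL, map_prod, Finset.prod_ne_zero_iff]
      intro c hc h0
      simp only [map_sum, map_pow, map_sub, eval_X, eval_C] at h0
      rw [Finset.sum_eq_zero_iff_of_nonneg (fun _ _ => sq_nonneg _)] at h0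
      apply (Finset.mem_erase.1 hc).1
      ext i
      have := h0 i (Finset.mem_univ _)
      have := pow_eq_zero_iff (two_ne_zero) |>.1 this
      linarith
    have := hpoly (∑ a, C (g a / eval a.1 (L a)) * L a)
    convert this using 1
    funext s
    rw [map_sum, Finset.sum_eq_single s]
    · simp [hL1 s]
    · intro a _ ha
      rw [map_mul, hL0 a s ha.symm, mul_zero]
    · simp
  have h1 := finrank_range_le_card (R := ℝ) b
  have h2 : (Set.range b).finrank ℝ = S.card := by
    rw [Set.finrank, ← hV, htop, finrank_top, Module.finrank_fintype_fun_eq_card]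
    simp
  rw [h2] at h1
  simpa using h1

theorem wb_totalDegree_pderiv {n : ℕ} (i : Fin n) (p : MvPolynomial (Fin n) ℝ) :
    (pderiv i p).totalDegree ≤ p.totalDegree := by
  rw [totalDegree, Finset.sup_le_iff]
  intro u hu
  rw [mem_support_iff, coeff_pderiv] at hu
  have h1 : u + Finsupp.single i 1 ∈ p.support := mem_support_iff.2 (left_ne_zero_of_mul hu)
  have h2 : (u + Finsupp.single i 1).degree ≤ p.totalDegree := le_totalDegree h1
  rw [map_add] at h2
  exact le_trans (show u.degree ≤ _ by omega) h2

theorem wb_deriv {n : ℕ} (i : Fin n) (c : Fin n → ℝ) (p : MvPolynomial (Fin n) ℝ) (t : ℝ) :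
    HasDerivAt (fun t => eval (Function.update c i t) p)
      (eval (Function.update c i t) (pderiv i p)) t := by
  induction p using MvPolynomial.induction_on with
  | C a => simpa using hasDerivAt_const t a
  | add p q hp hq => simp only [map_add]; exact hp.add hq
  | mul_X p j hp =>
    have hX : HasDerivAt (fun t => Function.update c i t j)
        (eval (Function.update c i t) (pderiv i (X j))) t := by
      by_cases h : j = i
      · subst h; simp only [Function.update_self, pderiv_X_self, map_one]; exact hasDerivAt_id t
      · simpa [h, pderiv_X_of_ne h] using hasDerivAt_const t (c j)
    have := hp.mul hX
    simp only [map_mul, eval_X, pderiv_mul, map_add]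
    exact this

theorem wb_bound {n : ℕ} (p : MvPolynomial (Fin n) ℝ) (D : ℕ) (hD : p.totalDegree ≤ D) :
    ∃ K : ℝ, 0 ≤ K ∧ ∀ y : Fin n → ℝ, 1 ≤ ‖y‖ → |eval y p| ≤ K * ‖y‖ ^ D := by
  refine ⟨∑ u ∈ p.support, |p.coeff u|, Finset.sum_nonneg fun _ _ => abs_nonneg _, ?_⟩
  intro y hy
  rw [eval_eq', Finset.sum_mul]
  refine (Finset.abs_sum_le_sum_abs _ _).trans (Finset.sum_le_sum fun u hu => ?_)
  rw [abs_mul, Finset.abs_prod]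
  refine mul_le_mul_of_nonneg_left ?_ (abs_nonneg _)
  calc ∏ i, |y i ^ u i| ≤ ∏ i, ‖y‖ ^ u i := by
        refine Finset.prod_le_prod (fun _ _ => abs_nonneg _) fun i _ => ?_
        rw [abs_pow]
        exact pow_le_pow_left₀ (abs_nonneg _) (norm_le_pi_norm y i) _
    _ = ‖y‖ ^ (u.degree) := by
        rw [Finset.prod_pow_eq_pow_sum, Finsupp.degree_eq_sum]
    _ ≤ ‖y‖ ^ D := pow_le_pow_right₀ hy ((le_totalDegree hu).trans hD)

theorem wb_subst {m n : ℕ} (g : Fin m → MvPolynomial (Fin n) ℝ)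
    (hg : ∀ i, (g i).totalDegree ≤ 1) (p : MvPolynomial (Fin m) ℝ) :
    (aeval g p).totalDegree ≤ p.totalDegree := by
  rw [aeval_def, eval₂_eq']
  refine totalDegree_finsetSum_le fun u hu => ?_
  refine (totalDegree_mul _ _).trans ?_
  rw [algebraMap_eq, totalDegree_C, zero_add]
  refine (totalDegree_finsetProd _ _).trans ?_
  refine le_trans (Finset.sum_le_sum (g := fun i => u i) fun i _ => ?_) ?_
  · exact (totalDegree_pow _ _).trans (by nlinarith [hg i])
  · rw [← Finsupp.degree_eq_sum]; exact le_totalDegree hu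

theorem wb_pos {α : Type*} [Finite α] (v : α → ℝ) (hv : ∀ a, 0 < v a) :
    ∃ δ : ℝ, 0 < δ ∧ ∀ a, δ < v a := by
  have h1 : ∀ᶠ δ in nhdsWithin (0 : ℝ) (Set.Ioi 0), ∀ a, δ < v a :=
    Filter.eventually_all.2 fun a => nhdsWithin_le_nhds (eventually_lt_nhds (hv a))
  obtain ⟨δ, h, h'⟩ := (h1.and self_mem_nhdsWithin).exists
  exact ⟨δ, h', h⟩

theorem wb_patterns {ι : Type*} [Fintype ι] {n D : ℕ} (q : ι → MvPolynomial (Fin n) ℝ)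
    (hD : ∑ i, (q i).totalDegree ≤ D) :
    (Set.range fun (y : Fin n → ℝ) (i : ι) => 0 ≤ eval y (q i)).ncard ≤ (2 * D + 1) ^ n := by
  classical
  set Pat := Set.range fun (y : Fin n → ℝ) (i : ι) => 0 ≤ eval y (q i) with hPat
  have hy : ∀ a : Pat, ∃ y : Fin n → ℝ, (fun i : ι => 0 ≤ eval y (q i)) = a.1 := fun a => a.2
  choose y hy using hy
  have hy' : ∀ a i, a.1 i ↔ 0 ≤ eval (y a) (q i) := fun a i => by rw [← hy a]
  obtain ⟨δ, hδ, hδ'⟩ := wb_pos (α := Pat × ι)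
    (fun x => if eval (y x.1) (q x.2) < 0 then - eval (y x.1) (q x.2) else 1)
    (fun x => by split_ifs <;> linarith)
  set F : ι → MvPolynomial (Fin n) ℝ := fun i => q i + C δ with hF
  set sg : Pat → ι → ℝ := fun a i => if a.1 i then 1 else -1 with hsg
  have hyF : ∀ a i, 0 < sg a i * eval (y a) (F i) := by
    intro a i
    have h1 := hδ' (a, i)
    have h2 := hy' a i
    simp only [hsg, hF, map_add, eval_C]
    dsimp only at h1
    by_cases h : a.1 i
    · have := h2.1 h
      rw [if_pos h]; linarith
    · have h3 : eval (y a) (q i) < 0 := not_le.1 fun h' => h (h2.2 h')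
      rw [if_pos h3] at h1
      rw [if_neg h]; linarith
  set P := ∏ i, F i with hP
  have hPdeg : P.totalDegree ≤ D := by
    refine (totalDegree_finsetProd _ _).trans (le_trans (Finset.sum_le_sum fun i _ => ?_) hD)
    refine (totalDegree_add _ _).trans ?_
    simp
  have hP2deg : (P ^ 2).totalDegree ≤ 2 * D :=
    (totalDegree_pow _ _).trans (by omega)
  have hyP : ∀ a, eval (y a) P ≠ 0 := by
    intro a
    rw [hP, map_prod, Finset.prod_ne_zero_iff]
    intro i _ h0
    have := hyF a i
    rw [h0, mul_zero] at this
    exact lt_irrefl _ this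
  have hsum : ∀ x : Fin n → ℝ, 0 ≤ ∑ i, x i ^ (2 * D + 2) := fun x =>
    Finset.sum_nonneg fun i _ => Even.pow_nonneg ⟨D + 1, by ring⟩ _
  obtain ⟨ε, hε, hε'⟩ := wb_pos (α := Pat)
    (fun a => (eval (y a) P) ^ 2 / (1 + ∑ i, y a i ^ (2 * D + 2)))
    (fun a => div_pos (by have := hyP a; positivity) (by have := hsum (y a); linarith))
  set g : MvPolynomial (Fin n) ℝ := P ^ 2 - C ε * ∑ i, X i ^ (2 * D + 2) with hg
  have hgev : ∀ x, eval x g = (eval x P) ^ 2 - ε * ∑ i, x i ^ (2 * D + 2) := by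
    intro x; simp [hg]
  have hgy : ∀ a, 0 < eval (y a) g := by
    intro a
    have h1 := hε' a
    have h2 := hsum (y a)
    rw [lt_div_iff₀ (by linarith)] at h1
    rw [hgev]
    nlinarith
  obtain ⟨K, hK, hK'⟩ := wb_bound (P ^ 2) (2 * D) hP2deg
  have hR : ∀ x : Fin n → ℝ, 1 + K / ε < ‖x‖ → eval x g < 0 := by
    intro x hx
    have hKε : 0 ≤ K / ε := by positivity
    have h1 : 1 ≤ ‖x‖ := by linarith
    have h2 := hK' x h1
    have h3 : ‖x‖ ^ (2 * D + 2) ≤ ∑ i, x i ^ (2 * D + 2) := by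
      by_contra hlt
      push Not at hlt
      have h4 : ∀ i, |x i| ^ (2 * D + 2) < ‖x‖ ^ (2 * D + 2) := fun i => by
        rw [Even.pow_abs ⟨D + 1, by ring⟩]
        refine lt_of_le_of_lt ?_ hlt
        exact Finset.single_le_sum (f := fun i => x i ^ (2 * D + 2))
          (fun i _ => Even.pow_nonneg ⟨D + 1, by ring⟩ _) (Finset.mem_univ i)
      have h5 : ‖x‖ < ‖x‖ := by
        rw [pi_norm_lt_iff (by linarith)]
        intro i
        exact lt_of_pow_lt_pow_left₀ _ (norm_nonneg _) (h4 i)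
      exact lt_irrefl _ h5
    have h6 : K < ε * ‖x‖ := by
      rw [mul_comm, ← div_lt_iff₀ hε]; linarith
    have h7 : K < ε * ‖x‖ ^ 2 := by nlinarith
    have h8 : 0 < ‖x‖ ^ (2 * D) := by positivity
    have h9 : K * ‖x‖ ^ (2 * D) < ε * ‖x‖ ^ (2 * D + 2) := by
      rw [pow_add]; nlinarith
    have h10 := (le_abs_self _).trans h2
    rw [map_pow] at h10
    rw [hgev]
    nlinarith
  have hcont : ∀ p : MvPolynomial (Fin n) ℝ, Continuous fun x : Fin n → ℝ => eval x p :=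
    fun p => MvPolynomial.continuous_eval p
  have hc : ∀ a : Pat, ∃ c : Fin n → ℝ, (∀ i, 0 < sg a i * eval c (F i)) ∧
      IsLocalMax (fun x => eval x g) c := by
    intro a
    have hcl : IsClosed {x : Fin n → ℝ | ∀ i, 0 ≤ sg a i * eval x (F i)} := by
      simp only [Set.ofPred_forall]
      exact isClosed_iInter fun i =>
        isClosed_le continuous_const (continuous_const.mul (hcont _))
    have hcpt := (isCompact_closedBall (0 : Fin n → ℝ) (1 + K / ε)).inter_right hcl
    obtain ⟨c, ⟨hcb, hcW⟩, hmax⟩ := hcpt.exists_isMaxOn ⟨y a, by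
      rw [mem_closedBall_zero_iff]
      by_contra h
      exact absurd (hR _ (not_le.1 h)) (hgy a).le.not_gt, fun i => (hyF a i).le⟩
      (hcont g).continuousOn
    have hmax' : ∀ x ∈ Metric.closedBall (0 : Fin n → ℝ) (1 + K / ε) ∩
      {x : Fin n → ℝ | ∀ i, 0 ≤ sg a i * eval x (F i)}, eval x g ≤ eval c g := hmax
    have hgc : 0 < eval c g := by
      refine (hgy a).trans_le (hmax' _ ⟨?_, fun i => (hyF a i).le⟩)
      rw [mem_closedBall_zero_iff]
      by_contra h
      exact absurd (hR _ (not_le.1 h)) (hgy a).le.not_gt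
    have hPc : eval c P ≠ 0 := by
      intro h0
      rw [hgev, h0] at hgc
      have := mul_nonneg hε.le (hsum c)
      nlinarith
    rw [hP, map_prod, Finset.prod_ne_zero_iff] at hPc
    have hpos : ∀ i, 0 < sg a i * eval c (F i) := by
      intro i
      refine lt_of_le_of_ne (hcW i) (Ne.symm (mul_ne_zero ?_ (hPc i (Finset.mem_univ _))))
      simp only [hsg]; split_ifs <;> norm_num
    refine ⟨c, hpos, ?_⟩
    have hev : ∀ᶠ x in nhds c, ∀ i, 0 < sg a i * eval x (F i) :=
      Filter.eventually_all.2 fun i =>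
        (continuous_const.mul (hcont (F i))).continuousAt.eventually (lt_mem_nhds (hpos i))
    filter_upwards [hev] with x hx
    by_cases hxb : ‖x‖ ≤ 1 + K / ε
    · exact hmax' x ⟨by rwa [mem_closedBall_zero_iff], fun i => (hx i).le⟩
    · exact ((hR x (not_le.1 hxb)).trans hgc).le
  choose c hc1 hc2 using hc
  have hinj : Function.Injective c := by
    intro a a' h
    apply Subtype.ext
    funext i
    have h1 := hc1 a i
    have h2 := hc1 a' i
    rw [h] at h1
    simp only [hsg] at h1 h2
    by_cases k1 : a.1 i <;> by_cases k2 : a'.1 i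
    · simp [k1, k2]
    · rw [if_pos k1] at h1; rw [if_neg k2] at h2; linarith
    · rw [if_neg k1] at h1; rw [if_pos k2] at h2; linarith
    · simp [k1, k2]
  have hcrit : ∀ a i, eval (c a) (pderiv i g) = 0 := by
    intro a i
    have h1 := wb_deriv i (c a) g (c a i)
    rw [Function.update_eq_self] at h1
    refine IsLocalMax.hasDerivAt_eq_zero ?_ h1
    have h2 : Filter.Tendsto (fun t => Function.update (c a) i t) (nhds (c a i)) (nhds (c a)) := by
      have : Continuous (fun t : ℝ => Function.update (c a) i t) :=
        continuous_const.update i continuous_id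
      have := this.tendsto (c a i)
      rwa [Function.update_eq_self] at this
    have h3 := h2.eventually (hc2 a)
    filter_upwards [h3] with t ht
    simpa using ht
  have : Fintype Pat := Fintype.ofFinite _
  have hcard := wb_count (k := 2 * D + 1)
    (fun i => C (1 / (ε * (2 * D + 2))) * pderiv i (P ^ 2)) (fun i => by
      refine lt_of_le_of_lt (totalDegree_mul _ _) ?_
      rw [totalDegree_C, zero_add]
      have := wb_totalDegree_pderiv i (P ^ 2)
      omega) (Finset.univ.image c) (by
      intro s hs i
      obtain ⟨a, _, rfl⟩ := Finset.mem_image.1 hs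
      have h1 := hcrit a i
      have h2 : pderiv i (∑ j, (X j : MvPolynomial (Fin n) ℝ) ^ (2 * D + 2)) =
          C (2 * D + 2 : ℝ) * X i ^ (2 * D + 1) := by
        rw [map_sum, Finset.sum_eq_single i]
        · rw [pderiv_pow, pderiv_X_self]
          have : ((2 * D + 2 : ℕ) : MvPolynomial (Fin n) ℝ) = C (2 * D + 2 : ℝ) := by
            rw [← map_natCast (C : ℝ →+* MvPolynomial (Fin n) ℝ)]; push_cast; rfl
          rw [this, mul_one]; rfl
        · intro j _ hj
          rw [pderiv_pow, pderiv_X_of_ne hj, mul_zero]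
        · simp
      rw [hg, map_sub, pderiv_C_mul, h2] at h1
      simp only [map_sub, map_mul, eval_C, map_pow, eval_X] at h1 ⊢
      have h3 : (0 : ℝ) < 2 * D + 2 := by positivity
      rw [sub_eq_zero] at h1
      rw [h1]
      field_simp)
  rw [Finset.card_image_of_injective _ hinj, Finset.card_univ] at hcard
  rwa [Set.ncard_eq_toFinset_card', Set.toFinset_card]

/-- Let `Z ⊆ ℝ^m × ℝ^n` be defined by a Boolean formula `φ` in atoms `f_i(x,y) ≥ 0`, where the
`f_i` are `b ≥ 1` polynomials of degree at most `b` in `m + n` variables, and for `y ∈ ℝ^n` let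
`R_y = {x : (x,y) ∈ Z}`. Then for any `z ≥ 1` points `p_1,…,p_z ∈ ℝ^m`, the number of distinct
sets of the form `R_y ∩ {p_1,…,p_z}` is at most `(50·b²·z)^n`. -/
theorem shatter_bound_semialgebraic (m n b : ℕ) (hb : 1 ≤ b)
    (f : Fin b → MvPolynomial (Fin (m + n)) ℝ)
    (hdeg : ∀ i, (f i).totalDegree ≤ b)
    (φ : (Fin b → Prop) → Prop)
    (Z : Set (Fin (m + n) → ℝ))
    (hZ : Z = {v | φ fun i => 0 ≤ eval v (f i)})
    (z : ℕ) (hz : 1 ≤ z) (p : Fin z → Fin m → ℝ) :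
    (Set.ncard {A : Set (Fin m → ℝ) | ∃ y : Fin n → ℝ,
        A = {x : Fin m → ℝ | Fin.append x y ∈ Z} ∩ Set.range p} : ℝ)
      ≤ (50 * (b : ℝ) ^ 2 * (z : ℝ)) ^ n := by
  classical
  set g : Fin z → Fin (m + n) → MvPolynomial (Fin n) ℝ :=
    fun j => Fin.append (fun i => C (p j i)) X with hg
  have hgd : ∀ j i, (g j i).totalDegree ≤ 1 := by
    intro j i
    refine Fin.addCases (fun i => ?_) (fun i => ?_) i
    · simp [hg]
    · simp [hg]
  set q : Fin b × Fin z → MvPolynomial (Fin n) ℝ := fun x => aeval (g x.2) (f x.1) with hq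
  have hqe : ∀ x y, eval y (q x) = eval (Fin.append (p x.2) y) (f x.1) := by
    intro x y
    have h1 : (fun i => eval y (g x.2 i)) = Fin.append (p x.2) y := by
      funext i
      refine Fin.addCases (fun i => ?_) (fun i => ?_) i
      · simp [hg]
      · simp [hg]
    rw [← h1]
    simp only [hq, aeval_def, eval₂_eq', map_sum, map_mul, map_prod, map_pow,
      algebraMap_eq, eval_C]
    rw [eval_eq']
  have hqD : ∑ x, (q x).totalDegree ≤ b ^ 2 * z := by
    refine (Finset.sum_le_card_nsmul _ _ b fun x _ =>
      (wb_subst _ (hgd x.2) _).trans (hdeg x.1)).trans ?_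
    simp only [Finset.card_univ, Fintype.card_prod, Fintype.card_fin, smul_eq_mul]
    exact le_of_eq (by ring)
  have hcount := wb_patterns q hqD
  have hle : Set.ncard {A : Set (Fin m → ℝ) | ∃ y : Fin n → ℝ,
        A = {x : Fin m → ℝ | Fin.append x y ∈ Z} ∩ Set.range p} ≤
      (Set.range fun (y : Fin n → ℝ) (x : Fin b × Fin z) => 0 ≤ eval y (q x)).ncard := by
    refine le_trans (Set.ncard_le_ncard ?_ (Set.toFinite _)) (Set.ncard_image_le
      (f := fun a : Fin b × Fin z → Prop => {x | ∃ j, p j = x ∧ φ fun i => a (i, j)})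
      (Set.toFinite _))
    rintro A ⟨y, rfl⟩
    refine ⟨_, ⟨y, rfl⟩, ?_⟩
    ext x
    simp only [hqe, hZ, Set.mem_ofPred_eq, Set.mem_inter_iff, Set.mem_range]
    constructor
    · rintro ⟨j, rfl, h⟩
      exact ⟨h, j, rfl⟩
    · rintro ⟨h, j, rfl⟩
      exact ⟨j, rfl, h⟩
  have h1 : (2 * (b ^ 2 * z) + 1) ^ n ≤ (50 * b ^ 2 * z) ^ n := by
    refine Nat.pow_le_pow_left ?_ n
    have : 0 < b ^ 2 * z := by positivity
    nlinarith
  have h2 := (hle.trans hcount).trans h1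
  exact_mod_cast h2
end

section
/- Fix positive integers b, d, and k, set D = 2^{k/d}, and assume D ≥ 2^b. Fix a Boolean function G : {0,1}^b → {0,1} and any choice of the subspaces 𝕍_1,…,𝕍_k defining 𝕐_k. Then the set W_G = {(x,y) ∈ 𝕏 × 𝕐_k : Z_{x,G} ∩ S_y ≠ ∅} is a semi-algebraic subset of 𝕏 × 𝕐_k, and there is a constant C = C(b,d) such that W_G can be defined by a Boolean combination of at most e^{D^C} polynomials, each of degree at most D^{C·d}. -/
open MvPolynomial

/-- The set `S ⊆ ℝ^M` is defined by a Boolean combination of (at most) `L` polynomials, each of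
degree at most `t`: there are polynomials `Q_1,…,Q_L`, atoms `Q_i < 0` or `Q_i = 0` (selected by
`τ`), and a Boolean formula `φ` in these atoms, cutting out exactly `S`. -/
def DefinedByPolys {M : ℕ} (S : Set (Fin M → ℝ)) (L : ℕ) (t : ℝ) : Prop :=
  ∃ (Q : Fin L → MvPolynomial (Fin M) ℝ) (τ : Fin L → Bool) (φ : (Fin L → Prop) → Prop),
    (∀ i, ((Q i).totalDegree : ℝ) ≤ t) ∧
    S = {x | φ fun i => if τ i then eval x (Q i) < 0 else eval x (Q i) = 0}


section Descartes
open Polynomial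

lemma wg_cnx (Q : ℝ[X]) (i : ℕ) :
    (Q.comp (-Polynomial.X)).coeff i = (-1) ^ i * Q.coeff i := by
  have : (-Polynomial.X : ℝ[X]) = Polynomial.C (-1) * Polynomial.X := by simp
  rw [this, Polynomial.comp_C_mul_X_coeff, mul_comm]

lemma wg_comp_eraseLead (P : ℝ[X]) : (P.comp (-Polynomial.X)).eraseLead = P.eraseLead.comp (-Polynomial.X) := by
  ext i
  have h : (P.comp (-Polynomial.X)).natDegree = P.natDegree := by
    rw [natDegree_comp]; simp
  have hc : ∀ (Q : ℝ[X]) (i : ℕ), (Q.comp (-Polynomial.X)).coeff i = (-1) ^ i * Q.coeff i := by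
    intro Q i
    exact wg_cnx Q i
  rw [eraseLead_coeff, h, hc, hc, eraseLead_coeff]
  split_ifs <;> simp

lemma wg_signVar_sum (n : ℕ) : ∀ (P : ℝ[X]), P.natDegree ≤ n → P ≠ 0 → ∀ k : ℕ,
    (∀ i < k, P.coeff i = 0) →
    P.signVariations + (P.comp (-Polynomial.X)).signVariations + k ≤ P.natDegree := by
  induction n with
  | zero =>
    intro P hP h0 k hk
    obtain ⟨c, rfl⟩ := natDegree_eq_zero.mp (Nat.le_zero.mp hP)
    have hk0 : k = 0 := by
      by_contra h
      have := hk 0 (Nat.pos_of_ne_zero h)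
      simp at this
      simp [this] at h0
    have : (C c : ℝ[X]).signVariations = 0 := by
      exact signVariations_monomial 0 c
    simp [hk0, this]
  | succ n ih =>
    intro P hP h0 k hk
    have hcoef : ∀ (Q : ℝ[X]) (i : ℕ), (Q.comp (-Polynomial.X)).coeff i = (-1) ^ i * Q.coeff i := by
      intro Q i
      exact wg_cnx Q i
    have hdeg : ∀ Q : ℝ[X], (Q.comp (-Polynomial.X)).natDegree = Q.natDegree := by
      intro Q; rw [natDegree_comp]; simp
    have hlc : ∀ Q : ℝ[X], (Q.comp (-Polynomial.X)).leadingCoeff = (-1) ^ Q.natDegree * Q.leadingCoeff := by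
      intro Q; rw [leadingCoeff, hdeg, hcoef, leadingCoeff]
    have hne : P.comp (-Polynomial.X) ≠ 0 := by
      intro h
      apply h0
      have := hlc P
      rw [h] at this
      simpa using this.symm
    have hkn : k ≤ P.natDegree := by
      by_contra h
      exact h0 (leadingCoeff_eq_zero.mp (hk _ (not_le.mp h)))
    rw [signVariations_eq_eraseLead_add_ite h0, signVariations_eq_eraseLead_add_ite hne,
      wg_comp_eraseLead]
    by_cases hQ : P.eraseLead = 0
    · have h1 : SignType.sign P.leadingCoeff ≠ 0 := by simpa using h0
      have h2 : SignType.sign (P.comp (-Polynomial.X)).leadingCoeff ≠ 0 := by simpa using hne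
      simp only [hQ, zero_comp, signVariations_zero, leadingCoeff_zero, sign_zero, neg_zero, h1, h2,
        if_false]
      omega
    · have hlt : P.eraseLead.natDegree < P.natDegree := by
        apply eraseLead_natDegree_lt
        by_contra h
        apply hQ
        have : P.support.card ≤ 1 := by omega
        have h9 : P.eraseLead.support.card = 0 := by
          rw [card_support_eraseLead]; omega
        exact Polynomial.card_support_eq_zero.mp h9
      have := ih P.eraseLead (by omega) hQ k (by
        intro i hi
        rw [eraseLead_coeff]
        split_ifs
        · rfl
        · exact hk i hi)
      by_cases h2 : P.eraseLead.natDegree + 2 ≤ P.natDegree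
      · split_ifs <;> omega
      · have h3 : P.natDegree = P.eraseLead.natDegree + 1 := by omega
        have ha : SignType.sign P.leadingCoeff ≠ 0 := by simpa using h0
        rw [hlc P, hlc P.eraseLead, h3]
        simp only [sign_mul, pow_succ, sign_pow, mul_neg, mul_one, Left.sign_neg, sign_one]
        have hs : (-1 : SignType) ^ P.eraseLead.natDegree = 1 ∨ 
          (-1 : SignType) ^ P.eraseLead.natDegree = -1 := by
          rcases Nat.even_or_odd P.eraseLead.natDegree with h | h
          · left; exact h.neg_one_pow
          · right; exact h.neg_one_pow
        generalize (-1 : SignType) ^ P.eraseLead.natDegree = u at hs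
        generalize SignType.sign P.leadingCoeff = a at *
        generalize SignType.sign P.eraseLead.leadingCoeff = c at *
        have : (if a = -c then 1 else 0) + (if -u * a = -(u * c) then 1 else 0) ≤ 1 := by
          revert hs ha; revert u a c; decide
        omega

/-- exactness of Descartes for split polynomials -/
lemma wg_descartes (P : ℝ[X]) (h0 : P ≠ 0) (hs : P.roots.card = P.natDegree) :
    P.roots.countP (0 < ·) = P.signVariations ∧
    P.roots.countP (· < 0) = (P.comp (-Polynomial.X)).signVariations := by
  have h1 := roots_countP_pos_le_signVariations (P := P)
  have h2 := roots_countP_pos_le_signVariations (P := P.comp (-Polynomial.X))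
  have h3 := wg_signVar_sum P.natDegree P le_rfl h0 (P.rootMultiplicity 0) (by
    have : (Polynomial.X - Polynomial.C (0:ℝ)) ^ P.rootMultiplicity 0 ∣ P := pow_rootMultiplicity_dvd P 0
    simp only [Polynomial.C_0, sub_zero] at this
    exact Polynomial.X_pow_dvd_iff.mp this)
  have h4 : (P.comp (-Polynomial.X)).roots = P.roots.map (fun x => -x) := by
    have := roots_comp_neg_X (p := P)
    exact this
  rw [h4, Multiset.countP_map, ← Multiset.countP_eq_card_filter] at h2
  have h5 : P.roots.countP (0 < ·) + P.roots.countP (· < 0) + P.rootMultiplicity 0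
      = P.roots.card := by
    rw [← count_roots]
    generalize P.roots = s
    induction s using Multiset.induction with
    | empty => simp
    | cons a s ih =>
      rw [Multiset.countP_cons, Multiset.countP_cons, Multiset.count_cons, Multiset.card_cons]
      rcases lt_trichotomy a 0 with h | h | h
      · simp [h, h.not_gt, h.ne']; omega
      · simp [h]; omega
      · simp [h, h.not_gt, h.ne]; omega
  simp only [Left.neg_pos_iff] at h2
  omega

lemma wg_signVar_congr (P Q : ℝ[X]) (hP : P ≠ 0) (hQ : Q ≠ 0) (hd : P.natDegree = Q.natDegree)
    (h : ∀ i, SignType.sign (P.coeff i) = SignType.sign (Q.coeff i)) :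
    P.signVariations = Q.signVariations := by
  have : P.coeffList.map SignType.sign = Q.coeffList.map SignType.sign := by
    unfold coeffList
    rw [withBotSucc_degree_eq_natDegree_add_one hP, withBotSucc_degree_eq_natDegree_add_one hQ, hd]
    simp [List.map_reverse, h, Function.comp_def]
  unfold signVariations
  rw [this]

lemma wg_count_congr (P Q : ℝ[X]) (hP : P ≠ 0) (hQ : Q ≠ 0) (hd : P.natDegree = Q.natDegree)
    (hsP : P.roots.card = P.natDegree) (hsQ : Q.roots.card = Q.natDegree)
    (h : ∀ i, SignType.sign (P.coeff i) = SignType.sign (Q.coeff i)) :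
    P.roots.countP (0 < ·) = Q.roots.countP (0 < ·) ∧
    P.roots.countP (· < 0) = Q.roots.countP (· < 0) := by
  have hdeg : ∀ Q : ℝ[X], (Q.comp (-Polynomial.X)).natDegree = Q.natDegree := by
    intro Q; rw [natDegree_comp]; simp
  have hcz : ∀ Q : ℝ[X], Q ≠ 0 → Q.comp (-Polynomial.X) ≠ 0 := by
    intro Q hQ h
    apply hQ
    ext i
    have := wg_cnx Q i
    rw [h] at this
    simpa using this.symm
  rw [(wg_descartes P hP hsP).1, (wg_descartes P hP hsP).2, (wg_descartes Q hQ hsQ).1,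
    (wg_descartes Q hQ hsQ).2]
  refine ⟨wg_signVar_congr P Q hP hQ hd h, wg_signVar_congr _ _ (hcz P hP) (hcz Q hQ) ?_ ?_⟩
  · rw [hdeg, hdeg, hd]
  · intro i
    rw [wg_cnx, wg_cnx, sign_mul, sign_mul, h]

end Descartes


section Sig
lemma wg_sigPos_le {M M' : Type*} [AddCommGroup M] [Module ℝ M] [AddCommGroup M'] [Module ℝ M']
    [FiniteDimensional ℝ M] [FiniteDimensional ℝ M'] (Q : QuadraticForm ℝ M)
    (Q' : QuadraticForm ℝ M') (f : M →ₗ[ℝ] M') (h : ∀ z, Q' (f z) = Q z) :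
    sigPos Q ≤ sigPos Q' := by
  obtain ⟨V, hV, hp⟩ := exists_finrank_eq_sigPos_and_posDef Q
  have hinj : ∀ v ∈ V, f v = 0 → v = 0 := by
    intro v hv h0
    by_contra hne
    have := hp ⟨v, hv⟩ (by simpa using hne)
    rw [QuadraticMap.restrict_apply] at this
    simp only at this
    rw [← h, h0] at this
    simp at this
  have hi : Function.Injective (f.domRestrict V) := by
    rw [← LinearMap.ker_eq_bot, LinearMap.ker_eq_bot']
    rintro ⟨v, hv⟩ h0
    simpa using hinj v hv h0
  have hd : Module.finrank ℝ (V.map f) = sigPos Q := by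
    rw [← hV, ← LinearMap.range_domRestrict, LinearMap.finrank_range_of_inj hi]
  rw [← hd]
  apply le_sigPos_of_posDef
  rintro ⟨w, v, hv, rfl⟩ hne
  rw [QuadraticMap.restrict_apply]
  simp only
  rw [h]
  have hv0 : v ≠ 0 := by
    rintro rfl
    simp at hne
  exact hp ⟨v, hv⟩ (by simpa using hv0)

lemma wg_sig_weighted {M ι : Type*} [AddCommGroup M] [Module ℝ M] [FiniteDimensional ℝ M]
    [Fintype ι] (Q : QuadraticForm ℝ M) (w : ι → ℝ) (f : M →ₗ[ℝ] (ι → ℝ))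
    (hf : Function.Surjective f) (h : ∀ z, Q z = ∑ i, w i * (f z i) ^ 2) :
    sigPos Q = {i | 0 < w i}.ncard ∧ sigNeg Q = {i | w i < 0}.ncard := by
  have key : ∀ z, QuadraticMap.weightedSumSquares ℝ w (f z) = Q z := by
    intro z
    rw [h, QuadraticMap.weightedSumSquares_apply]
    simp [pow_two]
  obtain ⟨g, hg⟩ := f.exists_rightInverse_of_surjective (LinearMap.range_eq_top.mpr hf)
  have hg' : ∀ y, f (g y) = y := fun y => LinearMap.congr_fun hg y
  have key2 : ∀ y, Q (g y) = QuadraticMap.weightedSumSquares ℝ w y := by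
    intro y; rw [← key, hg']
  rw [← QuadraticForm.sigPos_weightedSumSquares, ← QuadraticForm.sigNeg_weightedSumSquares]
  constructor
  · exact le_antisymm (wg_sigPos_le _ _ f key) (wg_sigPos_le _ _ g key2)
  · unfold sigNeg
    refine le_antisymm (wg_sigPos_le _ _ f ?_) (wg_sigPos_le _ _ g ?_)
    · intro z; simp [key]
    · intro z; simp [key2]

open Matrix in
lemma wg_toQF_apply {n : ℕ} (H : Matrix (Fin n) (Fin n) ℝ) (z : Fin n → ℝ) :
    H.toQuadraticForm' z = z ⬝ᵥ (H *ᵥ z) := by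
  simp [Matrix.toQuadraticForm', Matrix.toLinearMap₂'_apply']

open Matrix in
lemma wg_sig_eigen {n : ℕ} (H : Matrix (Fin n) (Fin n) ℝ) (hH : H.IsHermitian) :
    sigPos H.toQuadraticForm' = H.charpoly.roots.countP (0 < ·) ∧
    sigNeg H.toQuadraticForm' = H.charpoly.roots.countP (· < 0) ∧
    H.charpoly.roots.card = n := by
  have hr := hH.roots_charpoly_eq_eigenvalues
  set U : Matrix (Fin n) (Fin n) ℝ := (hH.eigenvectorUnitary : Matrix (Fin n) (Fin n) ℝ) with hU
  have hUU : U * Uᵀ = 1 := by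
    have := Unitary.coe_mul_star_self hH.eigenvectorUnitary
    simpa [Matrix.star_eq_conjTranspose] using this
  have hUU' : Uᵀ * U = 1 := by
    have := Unitary.coe_star_mul_self hH.eigenvectorUnitary
    simpa [Matrix.star_eq_conjTranspose] using this
  have hs : H = U * diagonal hH.eigenvalues * Uᵀ := by
    have := hH.spectral_theorem
    rw [Unitary.conjStarAlgAut_apply] at this
    simpa [Matrix.star_eq_conjTranspose, Function.comp_def] using this
  have := wg_sig_weighted H.toQuadraticForm' hH.eigenvalues (Matrix.mulVecLin Uᵀ) (by
    intro y
    refine ⟨U *ᵥ y, ?_⟩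
    rw [Matrix.mulVecLin_apply, Matrix.mulVec_mulVec, hUU', Matrix.one_mulVec]) (by
    intro z
    rw [wg_toQF_apply]
    conv_lhs => rw [hs]
    rw [← Matrix.mulVec_mulVec, ← Matrix.mulVec_mulVec, Matrix.dotProduct_mulVec,
      ← Matrix.mulVec_transpose]
    simp only [dotProduct, Matrix.mulVec_diagonal, Matrix.mulVecLin_apply]
    apply Finset.sum_congr rfl
    intros; ring)
  rw [this.1, this.2, hr]
  refine ⟨?_, ?_, ?_⟩
  · rw [Multiset.countP_map, Set.ncard_eq_toFinset_card']
    simp [Finset.card, Finset.filter]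
  · rw [Multiset.countP_map, Set.ncard_eq_toFinset_card']
    simp [Finset.card, Finset.filter]
  · simp
end Sig

lemma wg_sig_congr {n : ℕ} (H H' : Matrix (Fin n) (Fin n) ℝ) (hH : H.IsHermitian)
    (hH' : H'.IsHermitian)
    (h : ∀ i ≤ n, SignType.sign (H.charpoly.coeff i) = SignType.sign (H'.charpoly.coeff i)) :
    sigPos H.toQuadraticForm' = sigPos H'.toQuadraticForm' ∧
    sigNeg H.toQuadraticForm' = sigNeg H'.toQuadraticForm' := by
  obtain ⟨h1, h2, h3⟩ := wg_sig_eigen H hH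
  obtain ⟨h1', h2', h3'⟩ := wg_sig_eigen H' hH'
  have hd : ∀ K : Matrix (Fin n) (Fin n) ℝ, K.charpoly.natDegree = n := by
    intro K; simpa using K.charpoly_natDegree_eq_dim
  have := wg_count_congr H.charpoly H'.charpoly H.charpoly_monic.ne_zero
    H'.charpoly_monic.ne_zero (by rw [hd, hd]) (by rw [hd, h3]) (by rw [hd, h3']) (by
      intro i
      by_cases hi : i ≤ n
      · exact h i hi
      · rw [Polynomial.coeff_eq_zero_of_natDegree_lt (by rw [hd]; omega),
          Polynomial.coeff_eq_zero_of_natDegree_lt (by rw [hd]; omega)])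
  rw [h1, h2, h1', h2']
  exact this


section Newton
open Polynomial

noncomputable def wgNw (m : ℕ) (e : ℕ → ℝ) : ℕ → ℝ
  | k => ((m : ℝ) - k) * e k - ∑ l : Fin k, e (k - l) * wgNw m e l
termination_by k => k
decreasing_by exact l.2

lemma wg_newton_ps (S : Multiset ℂ) :
    (PowerSeries.mk (fun k => (S.map (fun α => α ^ k)).sum)) *
      (((S.map (fun α => (1 - Polynomial.C α * Polynomial.X : ℂ[X]))).prod : ℂ[X]) : PowerSeries ℂ)
    = (S.card : PowerSeries ℂ) * 
      (((S.map (fun α => (1 - Polynomial.C α * Polynomial.X : ℂ[X]))).prod : ℂ[X]) : PowerSeries ℂ)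
      - PowerSeries.X * ((derivative ((S.map 
        (fun α => (1 - Polynomial.C α * Polynomial.X : ℂ[X]))).prod) : ℂ[X]) : PowerSeries ℂ) := by
  induction S using Multiset.induction with
  | empty => 
    have : (PowerSeries.mk (fun _ : ℕ => (0:ℂ))) = 0 := by ext; simp
    simp [this]
  | cons a S ih =>
    have h1 : PowerSeries.mk (fun k => (((a ::ₘ S)).map (fun α => α ^ k)).sum) = 
      PowerSeries.mk (fun k => a ^ k) + PowerSeries.mk (fun k => (S.map (fun α => α ^ k)).sum) := by
      ext k; simp
    have h2 : PowerSeries.mk (fun k => a ^ k) * (1 - PowerSeries.C a * PowerSeries.X) = 1 := by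
      ext k
      rw [mul_sub, mul_one, mul_comm (PowerSeries.C a), ← mul_assoc]
      cases k with
      | zero => simp
      | succ k => 
        rw [map_sub, PowerSeries.coeff_mul_C, PowerSeries.coeff_succ_mul_X]
        simp [pow_succ, PowerSeries.coeff_one]
    rw [h1]
    simp only [Multiset.map_cons, Multiset.prod_cons, Multiset.card_cons, derivative_mul]
    generalize PowerSeries.mk (fun k => (S.map (fun α => α ^ k)).sum) = p at *
    generalize PowerSeries.mk (fun k => a ^ k) = g at *
    generalize (S.map (fun α => (1 - Polynomial.C α * Polynomial.X : ℂ[X]))).prod = E at *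
    simp only [derivative_sub, derivative_one, derivative_mul, derivative_C, derivative_X,
      Polynomial.coe_mul, Polynomial.coe_sub, Polynomial.coe_one, Polynomial.coe_C, 
      Polynomial.coe_X, Polynomial.coe_add, Polynomial.coe_zero] at *
    push_cast
    linear_combination (1 - PowerSeries.C a * PowerSeries.X) * ih + (E : PowerSeries ℂ) * h2

lemma wg_newton (S : Multiset ℂ) (e : ℕ → ℝ)
    (he : ∀ i, (e i : ℂ) = 
      ((S.map (fun α => (1 - Polynomial.C α * Polynomial.X : ℂ[X]))).prod).coeff i) (k : ℕ) :
    (wgNw S.card e k : ℂ) = (S.map (fun α => α ^ k)).sum := by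
  induction k using Nat.strong_induction_on with
  | _ k ih =>
    have h := congrArg (PowerSeries.coeff k) (wg_newton_ps S)
    have h0 : (e 0 : ℂ) = 1 := by
      rw [he]
      clear he ih h
      rw [coeff_zero_eq_eval_zero, eval_multiset_prod]
      simp
    have hX : ∀ (E : ℂ[X]), PowerSeries.coeff k (PowerSeries.X * ((derivative E : ℂ[X]) : PowerSeries ℂ))
        = k * E.coeff k := by
      intro E
      rw [mul_comm]
      cases k with
      | zero => simp
      | succ k => 
        rw [PowerSeries.coeff_succ_mul_X, Polynomial.coeff_coe, coeff_derivative]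
        push_cast; ring
    rw [PowerSeries.coeff_mul, map_sub, hX, Finset.Nat.sum_antidiagonal_eq_sum_range_succ_mk,
      Finset.sum_range_succ] at h
    have hn : ∀ (E : ℂ[X]), PowerSeries.coeff k ((S.card : PowerSeries ℂ) * (E : PowerSeries ℂ))
      = S.card * E.coeff k := by
      intro E
      have : (S.card : PowerSeries ℂ) = PowerSeries.C (S.card : ℂ) := by simp
      rw [this, PowerSeries.coeff_C_mul, Polynomial.coeff_coe]
    rw [hn] at h
    simp only [PowerSeries.coeff_mk, Polynomial.coeff_coe, ← he] at h
    rw [Nat.sub_self, h0] at h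
    rw [wgNw]
    push_cast
    have h5 : ∑ l : Fin k, (e (k - l) : ℂ) * (wgNw S.card e l : ℂ) = 
       ∑ x ∈ Finset.range k, (S.map (fun α => α ^ x)).sum * (e (k - x) : ℂ) := by
      rw [Finset.sum_range]
      apply Finset.sum_congr rfl
      intro l _
      rw [ih l l.2]; ring
    rw [h5]
    linear_combination -h

lemma wg_reverse (S : Multiset ℂ) : ((S.map (fun α => Polynomial.X - Polynomial.C α)).prod).reverse
    = (S.map (fun α => (1 - Polynomial.C α * Polynomial.X : ℂ[X]))).prod := by
  induction S using Multiset.induction with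
  | empty =>
    rw [Multiset.map_zero, Multiset.map_zero, Multiset.prod_zero,
      ← Polynomial.C_1, reverse_C]
  | cons a S ih =>
    rw [Multiset.map_cons, Multiset.prod_cons, reverse_mul_of_domain, ih, Multiset.map_cons, 
      Multiset.prod_cons]
    congr 1
    ext i
    rw [coeff_reverse, natDegree_X_sub_C]
    rcases i with _ | _ | i
    · have : revAt 1 0 = 1 := rfl
      rw [this]; simp [Polynomial.coeff_C]
    · have : revAt 1 (0 + 1) = 0 := rfl
      rw [this]; simp [Polynomial.coeff_one]
    · have : revAt 1 (i + 1 + 1) = i + 1 + 1 := revAt_eq_self_of_lt (by omega)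
      rw [this]; simp [Polynomial.coeff_X, Polynomial.coeff_one, Polynomial.coeff_C]

/-- coefficients of the reversed polynomial -/
lemma wg_newton_roots (R : ℝ[X]) (hR : R.Monic) (k : ℕ) :
    (wgNw R.natDegree (fun i => R.reverse.coeff i) k : ℂ) = 
      (((R.map (algebraMap ℝ ℂ)).roots).map (fun α => α ^ k)).sum := by
  have hs : (R.map (algebraMap ℝ ℂ)).Splits := IsAlgClosed.splits _
  have hc : (R.map (algebraMap ℝ ℂ)).roots.card = R.natDegree := by
    rw [← hs.natDegree_eq_card_roots, natDegree_map]
  rw [← hc]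
  apply wg_newton
  intro i
  rw [← wg_reverse]
  have : ((R.map (algebraMap ℝ ℂ)).roots.map (fun α => Polynomial.X - Polynomial.C α)).prod 
    = R.map (algebraMap ℝ ℂ) := by
    have := hs.eq_prod_roots
    rw [(hR.map (algebraMap ℝ ℂ)).leadingCoeff] at this
    simpa using this.symm
  rw [this, coeff_reverse, coeff_reverse, natDegree_map, Polynomial.coeff_map]
  rfl
end Newton


section Hermite
open Polynomial

noncomputable def wgHk (m J : ℕ) (g q : ℕ → ℝ) : Matrix (Fin m) (Fin m) ℝ :=
  Matrix.of fun a b => ∑ j ∈ Finset.range J, g j * q (a + b + j)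

lemma wgHk_herm (m J : ℕ) (g q : ℕ → ℝ) : (wgHk m J g q).IsHermitian := by
  ext a b
  simp [wgHk, add_comm]

lemma wg_anti (S : Finset ℂ) (hS : ∀ a ∈ S, (starRingEnd ℂ) a ∈ S) (δ : ℂ → ℝ)
    (hδ : ∀ a ∈ S, δ ((starRingEnd ℂ) a) = - δ a) : ∑ a ∈ S, δ a = 0 := by
  have : ∑ a ∈ S, δ a = ∑ a ∈ S, δ ((starRingEnd ℂ) a) := by
    apply Finset.sum_nbij' (fun a => (starRingEnd ℂ) a) (fun a => (starRingEnd ℂ) a)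
    · exact hS
    · exact hS
    · simp
    · simp
    · simp
  rw [Finset.sum_congr rfl hδ, Finset.sum_neg_distrib] at this
  linarith

lemma wg_ncard_sign {ι : Type*} [Fintype ι] (w : ι → ℝ) :
    (({i | 0 < w i}.ncard : ℝ) - ({i | w i < 0}.ncard : ℝ)) = ∑ i, (SignType.sign (w i) : ℝ) := by
  classical
  rw [Set.ncard_eq_toFinset_card', Set.ncard_eq_toFinset_card']
  simp only [Set.toFinset_ofPred, Finset.card_filter]
  push_cast
  rw [← Finset.sum_sub_distrib]
  apply Finset.sum_congr rfl
  intro i _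
  rcases lt_trichotomy (w i) 0 with h | h | h
  · simp [h, h.not_gt]
  · simp [h]
  · simp [h, h.not_gt]

lemma wg_evconj (G : ℝ[X]) (a : ℂ) : (G.map (algebraMap ℝ ℂ)).eval ((starRingEnd ℂ) a) = 
    (starRingEnd ℂ) ((G.map (algebraMap ℝ ℂ)).eval a) := by
  rw [Polynomial.eval_map, Polynomial.eval_map, Polynomial.hom_eval₂]
  congr 1
  ext x
  simp

lemma wg_count_conj (R : ℝ[X]) (a : ℂ) : 
    (R.map (algebraMap ℝ ℂ)).roots.count ((starRingEnd ℂ) a) = 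
    (R.map (algebraMap ℝ ℂ)).roots.count a := by
  rw [count_roots, count_roots, 
    Polynomial.eq_rootMultiplicity_map (starRingEnd ℂ).injective a, Polynomial.map_map]
  congr 2
  ext x
  simp

noncomputable def wgEv (m : ℕ) (a : ℂ) : (Fin m → ℝ) →ₗ[ℝ] ℂ where
  toFun z := ∑ i, (z i : ℂ) * a ^ (i : ℕ)
  map_add' x y := by simp [add_mul, Finset.sum_add_distrib]
  map_smul' c x := by simp [Finset.mul_sum, mul_assoc]

lemma wgEv_conj (m : ℕ) (a : ℂ) (z) : wgEv m ((starRingEnd ℂ) a) z = (starRingEnd ℂ) (wgEv m a z) := by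
  simp [wgEv]

lemma wg_interp (S : Finset ℂ) (m : ℕ) (hm : S.card ≤ m) (y : ℂ → ℂ)
    (hS : ∀ a ∈ S, (starRingEnd ℂ) a ∈ S)
    (hy : ∀ a ∈ S, y ((starRingEnd ℂ) a) = (starRingEnd ℂ) (y a)) :
    ∃ z : Fin m → ℝ, ∀ a ∈ S, wgEv m a z = y a := by
  classical
  let Y := Lagrange.interpolate S id y
  have hev : ∀ a ∈ S, Y.eval a = y a := by
    intro a ha
    exact Lagrange.eval_interpolate_at_node (v := id) y (Set.injOn_id _) ha
  have hdeg : Y.degree < m := lt_of_lt_of_le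
    (Lagrange.degree_interpolate_lt (v := id) y (Set.injOn_id _)) (by exact_mod_cast hm)
  have hsum : ∀ a, Y.eval a = ∑ i : Fin m, Y.coeff i * a ^ (i : ℕ) := by
    intro a
    rw [eval_eq_sum_degreeLTEquiv (mem_degreeLT.mpr hdeg)]
    rfl
  refine ⟨fun i => (Y.coeff i).re, ?_⟩
  intro a ha
  have h1 := hev a ha
  have h2 := hev _ (hS a ha)
  rw [hy a ha, hsum] at h2
  rw [hsum] at h1
  have h3 := congrArg (starRingEnd ℂ) h2
  simp only [map_sum, map_mul, map_pow, Complex.conj_conj] at h3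
  have h4 : ∀ w : ℂ, (w.re : ℂ) = (w + (starRingEnd ℂ) w) / 2 := by
    intro w
    rw [Complex.add_conj]; push_cast; ring
  show ∑ i : Fin m, (((Y.coeff i).re : ℝ) : ℂ) * a ^ (i : ℕ) = y a
  simp only [h4, add_div, add_mul, Finset.sum_add_distrib]
  have h5 : ∀ f : Fin m → ℂ, ∑ i : Fin m, f i / 2 * a ^ (i : ℕ) = 
     (∑ i : Fin m, f i * a ^ (i : ℕ)) / 2 := by
    intro f
    rw [Finset.sum_div]
    apply Finset.sum_congr rfl
    intros; ring
  rw [h5, h5, h1, h3]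
  ring

lemma wg_hk_quad (R G : ℝ[X]) (hR : R.Monic) (J : ℕ) (hJ : G.natDegree < J)
    (z : Fin R.natDegree → ℝ) :
    (wgHk R.natDegree J G.coeff (wgNw R.natDegree (fun i => R.reverse.coeff i))).toQuadraticForm' z
    = ∑ a ∈ (R.map (algebraMap ℝ ℂ)).roots.toFinset, 
      ((R.map (algebraMap ℝ ℂ)).roots.count a : ℝ) * 
        ((G.map (algebraMap ℝ ℂ)).eval a * (wgEv R.natDegree a z) ^ 2).re := by
  rw [wg_toQF_apply]
  set A := (R.map (algebraMap ℝ ℂ)).roots with hA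
  have key : (((z ⬝ᵥ (wgHk R.natDegree J G.coeff (wgNw R.natDegree (fun i => R.reverse.coeff i))).mulVec z : ℝ)) : ℂ) = 
    ∑ a ∈ A.toFinset, (A.count a : ℂ) * 
        ((G.map (algebraMap ℝ ℂ)).eval a * (wgEv R.natDegree a z) ^ 2) := by
    have hp : ∀ k, (wgNw R.natDegree (fun i => R.reverse.coeff i) k : ℂ) = 
       ∑ a ∈ A.toFinset, (A.count a : ℂ) * a ^ k := by
      intro k
      rw [wg_newton_roots R hR, Finset.sum_multiset_map_count]
      simp [hA]
    have hG : ∀ a : ℂ, (G.map (algebraMap ℝ ℂ)).eval a = 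
        ∑ j ∈ Finset.range J, (G.coeff j : ℂ) * a ^ j := by
      intro a
      rw [eval_eq_sum_range' (n := J) (by rw [natDegree_map]; exact hJ)]
      simp
    simp only [dotProduct, Matrix.mulVec, wgHk, Matrix.of_apply]
    push_cast
    simp only [hp, hG, wgEv, LinearMap.coe_mk, AddHom.coe_mk, pow_two]
    simp only [Finset.mul_sum, Finset.sum_mul]
    have e1 : ∀ a : ℂ, ∀ (i j : Fin R.natDegree) (k : ℕ), 
      (z i : ℂ) * ((G.coeff k : ℂ) * ((A.count a : ℂ) * a ^ (i + j + k : ℕ)) * (z j : ℂ)) 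
       = (A.count a : ℂ) * ((G.coeff k : ℂ) * a ^ k * ((z i : ℂ) * a ^ (i : ℕ) * ((z j : ℂ) * a ^ (j : ℕ)))) := by
      intros; ring
    simp only [e1]
    conv_lhs => rw [Finset.sum_comm]
    conv_rhs => rw [Finset.sum_comm]; enter [2, j]; rw [Finset.sum_comm]; enter [2, i]; rw [Finset.sum_comm]
  have := congrArg Complex.re key
  rw [Complex.ofReal_re] at this
  rw [this, Complex.re_sum]
  apply Finset.sum_congr rfl
  intro a _
  rw [← Complex.ofReal_natCast, Complex.re_ofReal_mul]
end Hermite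

section Tarski
open Polynomial

noncomputable def wgSq (g : ℂ) : ℂ := if g = 0 then 1 else g ^ ((1:ℂ)/2)

lemma wgSq_ne (g : ℂ) : wgSq g ≠ 0 := by
  unfold wgSq
  split_ifs with h
  · simp
  · simp [Complex.cpow_eq_zero_iff, h]

lemma wgSq_sq (g : ℂ) : g = (if g = 0 then 0 else 1) * wgSq g ^ 2 := by
  unfold wgSq
  split_ifs with h
  · simp [h]
  · rw [one_mul, ← Complex.cpow_nat_mul]; simp

theorem wg_hermite (R G : ℝ[X]) (hR : R.Monic) (J : ℕ) (hJ : G.natDegree < J) :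
    ((sigPos (wgHk R.natDegree J G.coeff (wgNw R.natDegree (fun i => R.reverse.coeff i))).toQuadraticForm' : ℕ) : ℝ)
    - (sigNeg (wgHk R.natDegree J G.coeff (wgNw R.natDegree (fun i => R.reverse.coeff i))).toQuadraticForm' : ℕ)
    = ∑ r ∈ R.roots.toFinset, (SignType.sign (G.eval r) : ℝ) := by
  classical
  set m := R.natDegree with hm
  set A := (R.map (algebraMap ℝ ℂ)).roots with hA
  set S := A.toFinset with hS
  set c := fun a : ℂ => (starRingEnd ℂ) a with hc
  have hcS : ∀ a ∈ S, c a ∈ S := by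
    intro a ha
    rw [hS, Multiset.mem_toFinset, ← Multiset.one_le_count_iff_mem] at ha ⊢
    rw [hA, wg_count_conj]; exact ha
  have hcard : S.card ≤ m := by
    calc S.card ≤ A.card := Multiset.toFinset_card_le A
      _ ≤ (R.map (algebraMap ℝ ℂ)).natDegree := Polynomial.card_roots' _
      _ = m := natDegree_map _
  set GE := fun a : ℂ => (G.map (algebraMap ℝ ℂ)).eval a with hGE
  have hGEc : ∀ a, GE (c a) = c (GE a) := fun a => wg_evconj G a
  set ε : ℂ → ℝ := fun a => if GE a = 0 then 0 else 1 with hε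
  have hεc : ∀ a, ε (c a) = ε a := by
    intro a
    simp only [hε, hGEc]; simp [hc]
  set β : ℂ → ℂ := fun a => if a.im = 0 then 1 else if 0 < a.im then wgSq (GE a) else c (wgSq (GE (c a))) with hβ
  have hβ0 : ∀ a, β a ≠ 0 := by
    intro a
    simp only [hβ]
    split_ifs
    · simp
    · exact wgSq_ne _
    · simpa [hc] using wgSq_ne _
  have hcc : ∀ a, c (c a) = a := fun a => Complex.conj_conj a
  have hβc : ∀ a, β (c a) = c (β a) := by
    intro a
    rcases lt_trichotomy a.im 0 with h | h | h
    · have h1 : (c a).im = -a.im := Complex.conj_im a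
      have h2 : (c a).im ≠ 0 := by rw [h1]; linarith
      have h3 : 0 < (c a).im := by rw [h1]; linarith
      simp only [hβ, h2, h3, h.ne, h.not_gt, if_true, if_false, hcc]
    · have h1 : (c a).im = 0 := by rw [show (c a).im = -a.im from Complex.conj_im a, h]; simp
      simp only [hβ, h1, h, if_true]; simp [hc]
    · have h1 : (c a).im = -a.im := Complex.conj_im a
      have h2 : (c a).im ≠ 0 := by rw [h1]; linarith
      have h3 : ¬ 0 < (c a).im := by rw [h1]; linarith
      simp only [hβ, h2, h3, h.ne', h, if_true, if_false, hcc]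
  have hGβ : ∀ a, a.im ≠ 0 → GE a = (ε a : ℂ) * β a ^ 2 := by
    have h1 : ∀ a, 0 < a.im → GE a = (ε a : ℂ) * β a ^ 2 := by
      intro a ha
      have := wgSq_sq (GE a)
      simp only [hβ, hε, ha.ne', ha, if_true, if_false]
      rw [apply_ite Complex.ofReal, Complex.ofReal_zero, Complex.ofReal_one]
      exact this
    intro a ha
    rcases lt_or_gt_of_ne ha with h | h
    · have h3 : 0 < (c a).im := by rw [show (c a).im = -a.im from Complex.conj_im a]; linarith
      have := congrArg c (h1 _ h3)
      rw [hGEc, hcc, hεc, hβc] at this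
      rw [this]
      simp [hc]
    · exact h1 a h
  set w : ℂ → ℝ := fun a => (A.count a : ℝ) with hw
  have hwc : ∀ a, w (c a) = w a := by
    intro a; simp only [hw, hA, hc]; rw [wg_count_conj]
  have hwpos : ∀ a ∈ S, 0 < w a := by
    intro a ha
    simp only [hw]
    exact_mod_cast Multiset.count_pos.mpr (Multiset.mem_toFinset.mp ha)
  set ω : ℂ → ℝ := fun a => if a.im = 0 then w a * (GE a).re else if 0 < a.im then 2 * w a * ε a else - (2 * w a * ε a) with hω
  have hreal : ∀ a : ℂ, a.im = 0 → c a = a := fun a h => Complex.conj_eq_iff_im.mpr h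
  have hsurj : ∀ τ : ℂ → ℝ, ∃ z : Fin m → ℝ, ∀ a ∈ S, (if a.im < 0 then (β a * wgEv m a z).im else (β a * wgEv m a z).re) = τ a := by
    intro τ
    obtain ⟨z, hz⟩ := wg_interp S m hcard (fun a => (if a.im = 0 then (τ a : ℂ) else if 0 < a.im then (τ a : ℂ) - Complex.I * τ (c a) else (τ (c a) : ℂ) + Complex.I * τ a) / β a) hcS (by
      intro a ha
      show _ / β (c a) = c _
      have h1 : (c a).im = -a.im := Complex.conj_im a
      change (if (c a).im = 0 then (τ (c a) : ℂ) else if 0 < (c a).im then (τ (c a) : ℂ) - Complex.I * τ (c (c a)) else (τ (c (c a)) : ℂ) + Complex.I * τ (c a)) / β (c a) = _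
      rw [hβc, hcc]
      rcases lt_trichotomy a.im 0 with h | h | h
      · have h2 : (c a).im ≠ 0 := by rw [h1]; linarith
        have h3 : 0 < (c a).im := by rw [h1]; linarith
        simp only [h2, h3, h.ne, h.not_gt, if_true, if_false]
        simp [hc]; ring
      · have h2 : (c a).im = 0 := by rw [h1, h]; simp
        simp only [h2, h, if_true, hreal a h]
        simp [hc]
      · have h2 : (c a).im ≠ 0 := by rw [h1]; linarith
        have h3 : ¬ 0 < (c a).im := by rw [h1]; linarith
        simp only [h2, h3, h.ne', h, if_true, if_false]
        simp [hc])
    refine ⟨z, fun a ha => ?_⟩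
    have h := hz a ha
    have h' : β a * wgEv m a z = (if a.im = 0 then (τ a : ℂ) else if 0 < a.im then (τ a : ℂ) - Complex.I * τ (c a) else (τ (c a) : ℂ) + Complex.I * τ a) := by
      rw [h]; exact mul_div_cancel₀ _ (hβ0 a)
    rw [h']
    rcases lt_trichotomy a.im 0 with h | h | h
    · simp [h, h.ne, h.not_gt]
    · simp [h]
    · simp [h, h.ne', h.not_gt]
  have hquad : ∀ z : Fin m → ℝ, (wgHk m J G.coeff (wgNw m (fun i => R.reverse.coeff i))).toQuadraticForm' z 
      = ∑ a : S, ω a * (if (a:ℂ).im < 0 then (β a * wgEv m a z).im else (β a * wgEv m a z).re) ^ 2 := by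
    intro z
    have h0 := wg_hk_quad R G hR J hJ z
    rw [h0, Finset.sum_coe_sort S (fun a => ω a * (if (a:ℂ).im < 0 then (β a * wgEv m a z).im else (β a * wgEv m a z).re) ^ 2)]
    rw [← sub_eq_zero, ← Finset.sum_sub_distrib]
    apply wg_anti S hcS
    suffices H : ∀ a, 0 < a.im → w (c a) * (GE (c a) * wgEv m (c a) z ^ 2).re - ω (c a) * (if (c a).im < 0 then (β (c a) * wgEv m (c a) z).im else (β (c a) * wgEv m (c a) z).re) ^ 2 = - (w a * (GE a * wgEv m a z ^ 2).re - ω a * (if a.im < 0 then (β a * wgEv m a z).im else (β a * wgEv m a z).re) ^ 2) by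
      intro a ha
      change w (c a) * (GE (c a) * wgEv m (c a) z ^ 2).re - ω (c a) * (if (c a).im < 0 then (β (c a) * wgEv m (c a) z).im else (β (c a) * wgEv m (c a) z).re) ^ 2 = - (w a * (GE a * wgEv m a z ^ 2).re - ω a * (if a.im < 0 then (β a * wgEv m a z).im else (β a * wgEv m a z).re) ^ 2)
      rcases lt_trichotomy a.im 0 with h | h | h
      · have h3 : 0 < (c a).im := by rw [show (c a).im = -a.im from Complex.conj_im a]; linarith
        have := H _ h3
        rw [hcc] at this
        linarith
      · rw [hreal a h]
        have h1 : (GE a).im = 0 := by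
          rw [← Complex.conj_eq_iff_im]
          have := hGEc a
          rw [hreal a h] at this; exact this.symm
        have h2 : (wgEv m a z).im = 0 := by
          rw [← Complex.conj_eq_iff_im]
          have := wgEv_conj m a z
          rw [show (starRingEnd ℂ) a = a from hreal a h] at this; exact this.symm
        simp [hω, hβ, h, pow_two, h1, h2]
        ring
      · exact H a h
    intro a h
    have h1 : (c a).im = -a.im := Complex.conj_im a
    have h2 : (c a).im ≠ 0 := by rw [h1]; linarith
    have h3 : ¬ 0 < (c a).im := by rw [h1]; linarith
    have h4 : (c a).im < 0 := by rw [h1]; linarith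
    have e1 : wgEv m (c a) z = c (wgEv m a z) := wgEv_conj m a z
    rw [hGβ a h.ne', hGβ _ h2, hwc, hεc, hβc, e1]
    simp only [hω, h2, h3, h4, h, h.ne', h.not_gt, if_true, if_false, hwc, hεc]
    simp only [hc, ← map_pow, ← map_mul, mul_assoc, Complex.re_ofReal_mul, Complex.conj_re, Complex.conj_im]
    simp [pow_two]
    ring
  let f : (Fin m → ℝ) →ₗ[ℝ] (S → ℝ) := 
    { toFun := fun z a => if (a:ℂ).im < 0 then (β a * wgEv m a z).im else (β a * wgEv m a z).re
      map_add' := by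
        intro x y; ext a; simp only [map_add, mul_add, Complex.add_im, Complex.add_re, Pi.add_apply]
        split_ifs <;> rfl
      map_smul' := by
        intro r x; ext a; simp only [map_smul, Pi.smul_apply, mul_smul_comm, Complex.smul_im, Complex.smul_re, RingHom.id_apply]
        split_ifs <;> rfl }
  have hf : Function.Surjective f := by
    intro τ
    obtain ⟨z, hz⟩ := hsurj (fun a => if h : a ∈ S then τ ⟨a, h⟩ else 0)
    refine ⟨z, ?_⟩
    ext a
    have := hz a a.2
    simp only [a.2, dif_pos] at this
    exact this
  obtain ⟨hp, hn⟩ := wg_sig_weighted (M := Fin m → ℝ) (ι := S) _ (fun a => ω a) f hf hquad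
  rw [hp, hn, wg_ncard_sign, Finset.sum_coe_sort S (fun a => (SignType.sign (ω a) : ℝ))]
  have hR0 : R ≠ 0 := hR.ne_zero
  have hRm : R.map (algebraMap ℝ ℂ) ≠ 0 := (hR.map _).ne_zero
  have s1 : ∑ a ∈ S, (SignType.sign (ω a) : ℝ) = ∑ a ∈ S, (if a.im = 0 then (SignType.sign (GE a).re : ℝ) else 0) := by
    rw [← sub_eq_zero, ← Finset.sum_sub_distrib]
    apply wg_anti S hcS
    intro a ha
    change (SignType.sign (ω (c a)) : ℝ) - (if (c a).im = 0 then (SignType.sign (GE (c a)).re : ℝ) else 0) = - ((SignType.sign (ω a) : ℝ) - (if a.im = 0 then (SignType.sign (GE a).re : ℝ) else 0))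
    have h1 : (c a).im = -a.im := Complex.conj_im a
    rcases lt_trichotomy a.im 0 with h | h | h
    · have h2 : (c a).im ≠ 0 := by rw [h1]; linarith
      have h3 : 0 < (c a).im := by rw [h1]; linarith
      simp only [hω, h2, h3, h.ne, h.not_gt, if_true, if_false, hwc, hεc]
      rw [Left.sign_neg]; push_cast; ring
    · rw [hreal a h]
      simp only [hω, h, if_true]
      rw [sign_mul, sign_pos (hwpos a ha), one_mul]; simp
    · have h2 : (c a).im ≠ 0 := by rw [h1]; linarith
      have h3 : ¬ 0 < (c a).im := by rw [h1]; linarith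
      simp only [hω, h2, h3, h.ne', h, if_true, if_false, hwc, hεc]
      rw [Left.sign_neg]; push_cast; ring
  rw [s1, ← Finset.sum_filter]
  symm
  have hev : ∀ (P : ℝ[X]) (r : ℝ), (P.map (algebraMap ℝ ℂ)).eval (r : ℂ) = ((P.eval r : ℝ) : ℂ) := by
    intro P r
    have := Polynomial.eval_map_algebraMap (B := ℂ) P (r : ℂ)
    rw [this]
    exact Polynomial.aeval_algebraMap_apply ℂ r P
  apply Finset.sum_nbij' (fun r : ℝ => (r : ℂ)) (fun a : ℂ => a.re)
  · intro r hr
    rw [Multiset.mem_toFinset, Polynomial.mem_roots hR0, Polynomial.IsRoot] at hr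
    simp [hS, hA, hRm, -Polynomial.eval_map_algebraMap, hev, hr]
  · intro a ha
    rw [Finset.mem_filter] at ha
    obtain ⟨h1, h2⟩ := ha
    have : (a.re : ℂ) = a := Complex.ext rfl (by simp [h2])
    rw [hS, Multiset.mem_toFinset, hA, Polynomial.mem_roots hRm, Polynomial.IsRoot, ← this, hev] at h1
    rw [Multiset.mem_toFinset, Polynomial.mem_roots hR0, Polynomial.IsRoot]
    exact_mod_cast h1
  · simp
  · intro a ha
    rw [Finset.mem_filter] at ha
    exact Complex.ext rfl (by simp [ha.2])
  · intro r hr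
    simp only [hGE, hev, Complex.ofReal_re]
end Tarski

section Comb
open Polynomial

lemma wg_indic (c σ : SignType) : ∑ e : Fin 3, (![1 - (c:ℝ)^2, (c:ℝ)/2, (c:ℝ)^2*3/2 - 1] : Fin 3 → ℝ) e * (σ:ℝ)^(e:ℕ) = if σ = c then 1 else 0 := by
  rw [Fin.sum_univ_three]
  cases c <;> cases σ <;> simp <;> norm_num

lemma wg_comb {α β : Type*} (A : Finset α) (B : Finset β) (s K : ℕ) (i0 : Fin s)
    (σ : α → Fin s → SignType) (σ' : β → Fin s → SignType) (hB : B.card ≤ K)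
    (h : ∀ (idx : Fin K → Fin s) (e : Fin K → Fin 3),
      ∑ a ∈ A, ∏ k, (σ a (idx k) : ℝ) ^ (e k : ℕ) = ∑ b ∈ B, ∏ k, (σ' b (idx k) : ℝ) ^ (e k : ℕ)) :
    ∀ a ∈ A, ∃ b ∈ B, ∀ i, σ' b i = σ a i := by
  classical
  intro a ha
  by_contra! hcon
  haveI : Nonempty (Fin s) := ⟨i0⟩
  choose! g hg using hcon
  set I := B.image g with hI
  have hIc : I.card ≤ K := Finset.card_image_le.trans hB
  let idx : Fin K → Fin s := fun k => if hk : (k : ℕ) < I.card then (I.equivFin.symm ⟨k, hk⟩ : Fin s) else i0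
  have hidx : ∀ i ∈ I, ∃ k, idx k = i := by
    intro i hi
    refine ⟨⟨I.equivFin ⟨i, hi⟩, lt_of_lt_of_le (Fin.is_lt _) hIc⟩, ?_⟩
    simp [idx]
  let co : Fin K → Fin 3 → ℝ := fun k => ![1 - (σ a (idx k):ℝ)^2, (σ a (idx k):ℝ)/2, (σ a (idx k):ℝ)^2*3/2 - 1]
  have key : ∀ τ : Fin s → SignType, ∑ e : Fin K → Fin 3, (∏ k, co k (e k)) * ∏ k, (τ (idx k) : ℝ) ^ (e k : ℕ) = if ∀ k, τ (idx k) = σ a (idx k) then 1 else 0 := by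
    intro τ
    simp only [← Finset.prod_mul_distrib]
    rw [← Fintype.piFinset_univ, ← Finset.prod_univ_sum (fun _ => Finset.univ) (fun k j => co k j * (τ (idx k) : ℝ) ^ (j : ℕ))]
    simp only [co, wg_indic]
    split_ifs with h
    · simp [h]
    · push Not at h
      obtain ⟨k, hk⟩ := h
      exact Finset.prod_eq_zero (Finset.mem_univ k) (by simp [hk])
  have e1 : ∑ x ∈ A, (if ∀ k, σ x (idx k) = σ a (idx k) then (1:ℝ) else 0) = ∑ x ∈ B, (if ∀ k, σ' x (idx k) = σ a (idx k) then (1:ℝ) else 0) := by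
    simp only [← key]
    rw [Finset.sum_comm, Finset.sum_comm (s := B)]
    apply Finset.sum_congr rfl
    intro e _
    rw [← Finset.mul_sum, ← Finset.mul_sum, h]
  have e2 : ∑ x ∈ B, (if ∀ k, σ' x (idx k) = σ a (idx k) then (1:ℝ) else 0) = 0 := by
    apply Finset.sum_eq_zero
    intro b hb
    rw [if_neg]
    intro hk
    obtain ⟨k, hk'⟩ := hidx (g b) (Finset.mem_image_of_mem g hb)
    have := hk k
    rw [hk'] at this
    exact hg b hb this
  rw [e2] at e1
  have e3 := Finset.single_le_sum (f := fun x => (if ∀ k, σ x (idx k) = σ a (idx k) then (1:ℝ) else 0)) (fun x _ => by split_ifs <;> norm_num) ha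
  rw [e1] at e3
  norm_num at e3

lemma wg_sign_const (g : ℝ[X]) (u v : ℝ) (h : ∀ x ∈ Set.uIcc u v, g.eval x ≠ 0) :
    SignType.sign (g.eval u) = SignType.sign (g.eval v) := by
  by_contra hne
  have hiv := intermediate_value_uIcc (a := u) (b := v) (f := fun x => g.eval x) g.continuousOn
  have hu := h u Set.left_mem_uIcc
  have hv := h v Set.right_mem_uIcc
  have : (0:ℝ) ∈ Set.uIcc (g.eval u) (g.eval v) := by
    rw [Set.mem_uIcc]
    rcases lt_or_gt_of_ne hu with h1 | h1 <;> rcases lt_or_gt_of_ne hv with h2 | h2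
    · simp [h1, h2] at hne
    · left; exact ⟨h1.le, h2.le⟩
    · right; exact ⟨h2.le, h1.le⟩
    · simp [h1, h2] at hne
  obtain ⟨x, hx, hx0⟩ := hiv this
  exact h x hx hx0

lemma wg_sign_top (g : ℝ[X]) : ∀ᶠ x in Filter.atTop, SignType.sign (g.eval x) = SignType.sign g.leadingCoeff := by
  by_cases hd : 0 < g.degree
  · have h0 : g.leadingCoeff ≠ 0 := by
      rw [Ne, leadingCoeff_eq_zero]; rintro rfl; simp at hd
    rcases lt_or_gt_of_ne h0 with h | h
    · filter_upwards [(g.tendsto_atBot_of_leadingCoeff_nonpos hd h.le).eventually_lt_atBot 0] with x hx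
      rw [sign_neg hx, sign_neg h]
    · filter_upwards [(g.tendsto_atTop_of_leadingCoeff_nonneg hd h.le).eventually_gt_atTop 0] with x hx
      rw [sign_pos hx, sign_pos h]
  · rw [Polynomial.eq_C_of_degree_le_zero (not_lt.mp hd)]
    simp

lemma wg_sign_bot (g : ℝ[X]) : ∀ᶠ x in Filter.atTop, SignType.sign (g.eval (-x)) = SignType.sign ((-1)^g.natDegree * g.leadingCoeff) := by
  filter_upwards [wg_sign_top (g.comp (-Polynomial.X))] with x hx
  rw [eval_comp] at hx
  simp only [Polynomial.eval_neg, Polynomial.eval_X] at hx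
  rw [hx, leadingCoeff_comp (by simp), mul_comm]
  simp

end Comb

section OneVar
open Polynomial

noncomputable def wgP {s : ℕ} (f : Fin s → ℝ[X]) (p : Fin s × Option (Fin s)) : ℝ[X] :=
  match p.2 with
  | none => f p.1
  | some j => derivative (f p.1 * f j)

noncomputable def wgE (P : ℝ[X]) (m i : ℕ) : ℝ :=
  if i = 0 then 1 else if i ≤ m then P.coeff (m - i) * P.coeff m ^ (i - 1) else 0

noncomputable def wgS (c : ℝ) (N : ℕ) (f : ℝ[X]) : ℝ[X] :=
  ∑ j ∈ Finset.range (N + 1), Polynomial.C (f.coeff j * c ^ (N - j)) * Polynomial.X ^ j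

noncomputable def wgG {s K : ℕ} (c : ℝ) (N : ℕ) (f : Fin s → ℝ[X]) (idx : Fin K → Fin s) (e : Fin K → Fin 3) : ℝ[X] :=
  ∏ k, (wgS c N (f (idx k))) ^ (e k : ℕ)

noncomputable def wgH {s K : ℕ} (P : ℝ[X]) (m N : ℕ) (f : Fin s → ℝ[X]) (idx : Fin K → Fin s) (e : Fin K → Fin 3) :
    Matrix (Fin m) (Fin m) ℝ :=
  wgHk m (2 * N * K + 1) (wgG (P.coeff m) N f idx e).coeff (wgNw m (wgE P m))

lemma wgS_eval (c : ℝ) (N : ℕ) (f : ℝ[X]) (hf : f.natDegree ≤ N) (a : ℝ) :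
    (wgS c N f).eval (c * a) = c ^ N * f.eval a := by
  rw [wgS, eval_finsetSum, eval_eq_sum_range' (Nat.lt_succ_of_le hf), Finset.mul_sum]
  apply Finset.sum_congr rfl
  intro j hj
  have : j ≤ N := Nat.lt_succ_iff.mp (Finset.mem_range.mp hj)
  simp only [Polynomial.eval_mul, Polynomial.eval_C, Polynomial.eval_pow, Polynomial.eval_X]
  rw [mul_pow, ← Nat.sub_add_cancel this, pow_add, Nat.sub_add_cancel this]
  ring

lemma wgS_deg (c : ℝ) (N : ℕ) (f : ℝ[X]) : (wgS c N f).natDegree ≤ N := by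
  apply natDegree_sum_le_of_forall_le
  intro j hj
  exact (natDegree_C_mul_X_pow_le _ _).trans (Nat.lt_succ_iff.mp (Finset.mem_range.mp hj))

lemma wgG_deg {s K : ℕ} (c : ℝ) (N : ℕ) (f : Fin s → ℝ[X]) (idx : Fin K → Fin s) (e : Fin K → Fin 3) :
    (wgG c N f idx e).natDegree ≤ 2 * N * K := by
  refine (natDegree_prod_le _ _).trans ?_
  calc _ ≤ ∑ k : Fin K, 2 * N := by
        apply Finset.sum_le_sum
        intro k _
        refine natDegree_pow_le.trans ?_
        exact Nat.mul_le_mul (by omega) (wgS_deg _ _ _)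
    _ = _ := by simp [mul_comm]

lemma wgE_eq (P : ℝ[X]) (m : ℕ) (hP : P.natDegree = m) (hm : 1 ≤ m) (i : ℕ) :
    P.integralNormalization.reverse.coeff i = wgE P m i := by
  have hP0 : P ≠ 0 := by rintro rfl; simp at hP; omega
  have hd : P.integralNormalization.natDegree = m := by
    rw [← hP]; exact natDegree_eq_of_degree_eq (degree_integralNormalization (p := P))
  rw [coeff_reverse, hd, wgE]
  rcases Nat.eq_zero_or_pos i with rfl | hi
  · rw [if_pos rfl, revAt_zero]
    rw [← hP, integralNormalization_coeff_natDegree hP0]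
  · rw [if_neg hi.ne']
    split_ifs with h
    · rw [revAt_le h, integralNormalization_coeff_ne_natDegree (by omega), hP, leadingCoeff, hP]
      congr 2; omega
    · rw [revAt_eq_self_of_lt (by omega)]
      apply coeff_eq_zero_of_natDegree_lt
      omega

lemma wg_tq {s K : ℕ} (P : ℝ[X]) (m N : ℕ) (hP : P.natDegree = m) (hm : 1 ≤ m) (hN : Even N)
    (f : Fin s → ℝ[X]) (hf : ∀ i, (f i).natDegree ≤ N) (idx : Fin K → Fin s) (e : Fin K → Fin 3) :
    ((sigPos (wgH P m N f idx e).toQuadraticForm' : ℕ) : ℝ) - (sigNeg (wgH P m N f idx e).toQuadraticForm' : ℕ)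
    = ∑ a ∈ P.roots.toFinset, ∏ k, (SignType.sign ((f (idx k)).eval a) : ℝ) ^ (e k : ℕ) := by
  have hP0 : P ≠ 0 := by rintro rfl; simp at hP; omega
  set R := P.integralNormalization with hR
  have hd : R.natDegree = m := by
    rw [← hP]; exact natDegree_eq_of_degree_eq (degree_integralNormalization (p := P))
  have hmon : R.Monic := monic_integralNormalization hP0
  have := wg_hermite R (wgG (P.coeff m) N f idx e) hmon (2 * N * K + 1) (Nat.lt_succ_of_le (wgG_deg _ _ _ _ _))
  have hE : (fun i => R.reverse.coeff i) = wgE P m := by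
    ext i; exact wgE_eq P m hP hm i
  rw [hE] at this
  have hc : P.coeff m ≠ 0 := by rw [← hP]; exact leadingCoeff_ne_zero.mpr hP0
  have hroot : ∀ a, R.eval (P.coeff m * a) = P.coeff m ^ (m - 1) * P.eval a := by
    intro a
    have := integralNormalization_eval₂_leadingCoeff_mul (p := P) (by omega) (RingHom.id ℝ) a
    simp only [Polynomial.eval₂_id, RingHom.id_apply, leadingCoeff, hP] at this
    rw [hR, this]
  rw [show (wgH P m N f idx e) = wgHk m (2 * N * K + 1) (wgG (P.coeff m) N f idx e).coeff (wgNw m (wgE P m)) from rfl]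
  rw [hd] at this
  rw [this]
  symm
  apply Finset.sum_nbij' (fun a => P.coeff m * a) (fun a => a / P.coeff m)
  · intro a ha
    rw [Multiset.mem_toFinset, mem_roots hP0, IsRoot] at ha
    rw [Multiset.mem_toFinset, mem_roots hmon.ne_zero, IsRoot, hroot, ha, mul_zero]
  · intro a ha
    rw [Multiset.mem_toFinset, mem_roots hmon.ne_zero, IsRoot] at ha
    rw [Multiset.mem_toFinset, mem_roots hP0, IsRoot]
    have h2 := hroot (a / P.coeff m)
    rw [mul_div_cancel₀ _ hc, ha] at h2
    have := mul_eq_zero.mp h2.symm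
    exact this.resolve_left (pow_ne_zero _ hc)
  · intro a _; field_simp
  · intro a _; field_simp
  · intro a _
    rw [wgG, Polynomial.eval_prod]
    simp only [Polynomial.eval_pow]
    rw [show SignType.sign (∏ k : Fin K, (wgS (P.coeff m) N (f (idx k))).eval (P.coeff m * a) ^ (e k : ℕ)) = signHom (∏ k : Fin K, (wgS (P.coeff m) N (f (idx k))).eval (P.coeff m * a) ^ (e k : ℕ)) from rfl, map_prod]
    rw [show ((∏ k : Fin K, signHom ((wgS (P.coeff m) N (f (idx k))).eval (P.coeff m * a) ^ (e k : ℕ)) : SignType) : ℝ) = SignType.castHom (∏ k : Fin K, signHom ((wgS (P.coeff m) N (f (idx k))).eval (P.coeff m * a) ^ (e k : ℕ))) from rfl, map_prod]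
    apply Finset.prod_congr rfl
    intro k _
    rw [map_pow, map_pow, wgS_eval _ _ _ (hf _)]
    congr 1
    rw [map_mul, show signHom (P.coeff m ^ N) = 1 from sign_pos (hN.pow_pos hc), one_mul]
    rfl
end OneVar

section OneStep
open Polynomial

lemma wgP_deg {s t : ℕ} (f : Fin s → ℝ[X]) (hf : ∀ i, (f i).natDegree ≤ t) (p) : (wgP f p).natDegree ≤ 2 * t := by
  rcases p with ⟨i, _ | j⟩
  · exact (hf i).trans (by omega)
  · refine (natDegree_derivative_le _).trans ((Nat.sub_le _ _).trans (natDegree_mul_le.trans ?_))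
    have := hf i
    have := hf j
    simp only
    omega

lemma wg_natDeg_congr (P P' : ℝ[X]) (N : ℕ) (hP : P.natDegree ≤ N) (hP' : P'.natDegree ≤ N)
    (h : ∀ j ≤ N, SignType.sign (P.coeff j) = SignType.sign (P'.coeff j)) : P.natDegree = P'.natDegree ∧ (P = 0 ↔ P' = 0) ∧ ∀ j, SignType.sign (P.coeff j) = SignType.sign (P'.coeff j) := by
  have h' : ∀ j, SignType.sign (P.coeff j) = SignType.sign (P'.coeff j) := by
    intro j
    rcases le_or_gt j N with hj | hj
    · exact h j hj
    · rw [coeff_eq_zero_of_natDegree_lt (by omega), coeff_eq_zero_of_natDegree_lt (by omega)]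
  have h0 : ∀ j, P.coeff j = 0 ↔ P'.coeff j = 0 := by
    intro j
    rw [← sign_eq_zero_iff, h' j, sign_eq_zero_iff]
  refine ⟨?_, ?_, h'⟩
  · have : P.support = P'.support := by
      ext j; simp [h0 j]
    have hdd : P.degree = P'.degree := by
      rw [Polynomial.degree, Polynomial.degree, this]
    exact natDegree_eq_of_degree_eq hdd
  · rw [Polynomial.ext_iff, Polynomial.ext_iff]
    simp [h0]

structure WgSame {s : ℕ} (t : ℕ) (f f' : Fin s → ℝ[X]) : Prop where
  df : ∀ i, (f i).natDegree ≤ t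
  df' : ∀ i, (f' i).natDegree ≤ t
  co : ∀ p, ∀ j ≤ 2 * t, SignType.sign ((wgP f p).coeff j) = SignType.sign ((wgP f' p).coeff j)
  ch : ∀ p, ∀ m ≤ 2 * t, ∀ (idx : Fin (2*t) → Fin s) (e : Fin (2*t) → Fin 3), ∀ l ≤ 2 * t, 
    SignType.sign ((wgH (wgP f p) m (2*t) f idx e).charpoly.coeff l) = SignType.sign ((wgH (wgP f' p) m (2*t) f' idx e).charpoly.coeff l)

lemma wg_root_case {s t : ℕ} {f f' : Fin s → ℝ[X]} (h : WgSame t f f') (p : Fin s × Option (Fin s)) (hp : wgP f p ≠ 0)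
    (v : ℝ) (hv : (wgP f p).eval v = 0) : ∃ v', ∀ i, SignType.sign ((f' i).eval v') = SignType.sign ((f i).eval v) := by
  obtain ⟨hd, hz, -⟩ := wg_natDeg_congr _ _ (2*t) (wgP_deg f h.df p) (wgP_deg f' h.df' p) (h.co p)
  have hp' : wgP f' p ≠ 0 := fun h => hp (hz.mpr h)
  have hm : 1 ≤ (wgP f p).natDegree := by
    by_contra hlt
    have h0 : (wgP f p).natDegree = 0 := by omega
    rw [Polynomial.eq_C_of_natDegree_eq_zero h0] at hv hp
    simp at hv
    simp [hv] at hp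
  have := wg_comb (wgP f p).roots.toFinset (wgP f' p).roots.toFinset s (2*t) p.1 
    (fun a i => SignType.sign ((f i).eval a)) (fun a i => SignType.sign ((f' i).eval a)) 
    ((Multiset.toFinset_card_le _).trans ((Polynomial.card_roots' _).trans (wgP_deg f' h.df' p))) (by
      intro idx e
      have t1 := wg_tq (wgP f p) _ (2*t) rfl hm (even_two_mul t) f (fun i => (h.df i).trans (by omega)) idx e
      have t2 := wg_tq (wgP f' p) _ (2*t) hd.symm hm (even_two_mul t) f' (fun i => (h.df' i).trans (by omega)) idx e
      rw [← t1, ← t2]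
      obtain ⟨c1, c2⟩ := wg_sig_congr (wgH (wgP f p) (wgP f p).natDegree (2*t) f idx e) (wgH (wgP f' p) (wgP f p).natDegree (2*t) f' idx e) (wgHk_herm _ _ _ _) (wgHk_herm _ _ _ _)
        (fun l hl => h.ch p _ (wgP_deg f h.df p) idx e l (hl.trans (wgP_deg f h.df p)))
      rw [c1, c2]) v (by rw [Multiset.mem_toFinset, mem_roots hp]; exact hv)
  obtain ⟨b, -, hb⟩ := this
  exact ⟨b, hb⟩

theorem wg_onevar {s t : ℕ} {f f' : Fin s → ℝ[X]} (h : WgSame t f f') (v : ℝ) :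
    ∃ v', ∀ i, SignType.sign ((f' i).eval v') = SignType.sign ((f i).eval v) := by
  classical
  by_cases h1 : ∃ i, f i ≠ 0 ∧ (f i).eval v = 0
  · obtain ⟨i, hi, hv⟩ := h1
    exact wg_root_case h (i, none) hi v hv
  push Not at h1
  have hcong : ∀ i, (f i).natDegree = (f' i).natDegree ∧ (f i = 0 ↔ f' i = 0) ∧ SignType.sign (f i).leadingCoeff = SignType.sign (f' i).leadingCoeff := by
    intro i
    obtain ⟨hd, hz, hs⟩ := wg_natDeg_congr (f i) (f' i) (2*t) (wgP_deg f h.df (i, none)) (wgP_deg f' h.df' (i, none)) (h.co (i, none))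
    refine ⟨hd, hz, ?_⟩
    rw [leadingCoeff, leadingCoeff, ← hd, hs]
  set Z : Finset ℝ := Finset.univ.biUnion (fun i => (f i).roots.toFinset) with hZ
  have hmem : ∀ x, x ∈ Z ↔ ∃ i, f i ≠ 0 ∧ (f i).eval x = 0 := by
    intro x
    simp [hZ]
  have hvZ : v ∉ Z := by
    rw [hmem]; push Not; exact h1
  by_cases hhi : ∃ x ∈ Z, v < x
  · by_cases hlo : ∃ x ∈ Z, x < v
    · -- middle
      obtain ⟨b, hb, hbm⟩ := Finset.exists_min_image (Z.filter (fun x => v < x)) id (by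
        obtain ⟨x, hx, hx'⟩ := hhi; exact ⟨x, Finset.mem_filter.mpr ⟨hx, hx'⟩⟩)
      obtain ⟨a, ha, ham⟩ := Finset.exists_max_image (Z.filter (fun x => x < v)) id (by
        obtain ⟨x, hx, hx'⟩ := hlo; exact ⟨x, Finset.mem_filter.mpr ⟨hx, hx'⟩⟩)
      rw [Finset.mem_filter] at ha hb
      obtain ⟨i, hi, hia⟩ := (hmem a).mp ha.1
      obtain ⟨j, hj, hjb⟩ := (hmem b).mp hb.1
      obtain ⟨ξ, hξ, hξ0⟩ := exists_deriv_eq_zero (f := fun x => (f i * f j).eval x) (ha.2.trans hb.2) (f i * f j).continuousOn (by simp [hia, hjb])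
      rw [Polynomial.deriv] at hξ0
      have hne : derivative (f i * f j) ≠ 0 := by
        intro h0
        have h2 := Polynomial.derivative_eq_zero.mp h0
        have h3 := Polynomial.eq_C_of_natDegree_eq_zero h2
        have h4 : (f i * f j).eval a = 0 := by simp [hia]
        rw [h3] at h4
        simp only [Polynomial.eval_C] at h4
        rw [h4] at h3
        simp [hi, hj] at h3
      obtain ⟨v', hv'⟩ := wg_root_case h (i, some j) hne ξ hξ0
      refine ⟨v', fun l => ?_⟩
      rw [hv']
      by_cases hl : f l = 0
      · simp [hl]
      apply wg_sign_const
      intro x hx h0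
      have hxZ : x ∈ Z := (hmem x).mpr ⟨l, hl, h0⟩
      have hxab : a < x ∧ x < b := by
        rw [Set.mem_uIcc] at hx
        obtain ⟨q1, q2⟩ := hξ
        obtain ⟨-, q3⟩ := ha
        obtain ⟨-, q4⟩ := hb
        constructor <;> rcases hx with hx | hx <;> linarith [hx.1, hx.2]
      rcases lt_trichotomy x v with hlt | heq | hgt
      · have := ham x (Finset.mem_filter.mpr ⟨hxZ, hlt⟩)
        simp only [id] at this
        linarith [hxab.1]
      · exact hvZ (heq ▸ hxZ)
      · have := hbm x (Finset.mem_filter.mpr ⟨hxZ, hgt⟩)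
        simp only [id] at this
        linarith [hxab.2]
    · push Not at hlo
      have e1 : ∀ᶠ x in Filter.atTop, ∀ l, SignType.sign ((f l).eval (-x)) = SignType.sign ((-1)^(f l).natDegree * (f l).leadingCoeff) := by
        rw [Filter.eventually_all]; exact fun l => wg_sign_bot (f l)
      have e2 : ∀ᶠ x in Filter.atTop, ∀ l, SignType.sign ((f' l).eval (-x)) = SignType.sign ((-1)^(f' l).natDegree * (f' l).leadingCoeff) := by
        rw [Filter.eventually_all]; exact fun l => wg_sign_bot (f' l)
      obtain ⟨x, ⟨hx1, hx2⟩, hx3⟩ := ((e1.and e2).and (Filter.eventually_ge_atTop (-v))).exists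
      refine ⟨-x, fun l => ?_⟩
      by_cases hl : f l = 0
      · simp [hl, (hcong l).2.1.mp hl]
      rw [hx2 l, sign_mul, ← (hcong l).1, ← (hcong l).2.2, ← sign_mul, ← hx1 l]
      apply wg_sign_const
      intro y hy h0
      have hyZ : y ∈ Z := (hmem y).mpr ⟨l, hl, h0⟩
      rw [Set.uIcc_of_le (by linarith)] at hy
      have := hlo y hyZ
      exact hvZ ((le_antisymm this hy.2) ▸ hyZ)
  · push Not at hhi
    have e1 : ∀ᶠ x in Filter.atTop, ∀ l, SignType.sign ((f l).eval x) = SignType.sign ((f l).leadingCoeff) := by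
      rw [Filter.eventually_all]; exact fun l => wg_sign_top (f l)
    have e2 : ∀ᶠ x in Filter.atTop, ∀ l, SignType.sign ((f' l).eval x) = SignType.sign ((f' l).leadingCoeff) := by
      rw [Filter.eventually_all]; exact fun l => wg_sign_top (f' l)
    obtain ⟨x, ⟨hx1, hx2⟩, hx3⟩ := ((e1.and e2).and (Filter.eventually_ge_atTop v)).exists
    refine ⟨x, fun l => ?_⟩
    by_cases hl : f l = 0
    · simp [hl, (hcong l).2.1.mp hl]
    rw [hx2 l, ← (hcong l).2.2, ← hx1 l]
    apply wg_sign_const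
    intro y hy h0
    have hyZ : y ∈ Z := (hmem y).mpr ⟨l, hl, h0⟩
    rw [Set.uIcc_of_ge (by linarith)] at hy
    have := hhi y hyZ
    exact hvZ ((le_antisymm hy.1 this) ▸ hyZ)
end OneStep

section PFsec
open Polynomial

def WgPF {n : ℕ} (a : ℕ) (F : (Fin n → ℝ) → ℝ) : Prop :=
  ∃ Q : MvPolynomial (Fin n) ℝ, Q.totalDegree ≤ a ∧ ∀ x, MvPolynomial.eval x Q = F x

def WgPC {n : ℕ} (a : ℕ) (F : (Fin n → ℝ) → ℝ[X]) : Prop :=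
  ∀ j, WgPF a (fun x => (F x).coeff j)

variable {n : ℕ}

lemma WgPF.mono {a b : ℕ} {F : (Fin n → ℝ) → ℝ} (h : WgPF a F) (hab : a ≤ b) : WgPF b F := by
  obtain ⟨Q, h1, h2⟩ := h
  exact ⟨Q, h1.trans hab, h2⟩

lemma WgPF.const (a : ℕ) (c : ℝ) : WgPF a (fun _ : Fin n → ℝ => c) :=
  ⟨MvPolynomial.C c, by simp, by simp⟩

lemma WgPF.add {a : ℕ} {F G : (Fin n → ℝ) → ℝ} (h : WgPF a F) (h' : WgPF a G) : WgPF a (fun x => F x + G x) := by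
  obtain ⟨Q, h1, h2⟩ := h
  obtain ⟨Q', h1', h2'⟩ := h'
  exact ⟨Q + Q', (MvPolynomial.totalDegree_add _ _).trans (max_le h1 h1'), by simp [h2, h2']⟩

lemma WgPF.mul {a b : ℕ} {F G : (Fin n → ℝ) → ℝ} (h : WgPF a F) (h' : WgPF b G) : WgPF (a + b) (fun x => F x * G x) := by
  obtain ⟨Q, h1, h2⟩ := h
  obtain ⟨Q', h1', h2'⟩ := h'
  exact ⟨Q * Q', (MvPolynomial.totalDegree_mul _ _).trans (add_le_add h1 h1'), by simp [h2, h2']⟩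

lemma WgPF.smul {a : ℕ} {F : (Fin n → ℝ) → ℝ} (c : ℝ) (h : WgPF a F) : WgPF a (fun x => c * F x) := by
  have := (WgPF.const 0 c).mul h
  rwa [zero_add] at this

lemma WgPF.sub {a : ℕ} {F G : (Fin n → ℝ) → ℝ} (h : WgPF a F) (h' : WgPF a G) : WgPF a (fun x => F x - G x) := by
  have := h.add (h'.smul (-1))
  convert this using 2
  ring

lemma WgPF.sum {a : ℕ} {ι : Type*} (s : Finset ι) {F : ι → (Fin n → ℝ) → ℝ} (h : ∀ i ∈ s, WgPF a (F i)) :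
    WgPF a (fun x => ∑ i ∈ s, F i x) := by
  classical
  induction s using Finset.induction_on with
  | empty => simpa using WgPF.const a 0
  | insert i s hi ih =>
    simp only [Finset.sum_insert hi]
    exact (h i (by simp)).add (ih fun j hj => h j (by simp [hj]))

lemma WgPF.pow {a : ℕ} {F : (Fin n → ℝ) → ℝ} (h : WgPF a F) (k : ℕ) : WgPF (a * k) (fun x => F x ^ k) := by
  induction k with
  | zero => simpa using WgPF.const _ 1
  | succ k ih => simp only [pow_succ]; exact ih.mul h

lemma WgPC.mono {a b : ℕ} {F : (Fin n → ℝ) → ℝ[X]} (h : WgPC a F) (hab : a ≤ b) : WgPC b F :=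
  fun j => (h j).mono hab

lemma WgPC.const (a : ℕ) (p : ℝ[X]) : WgPC a (fun _ : Fin n → ℝ => p) := fun _ => WgPF.const _ _

lemma WgPC.ofC {a : ℕ} {F : (Fin n → ℝ) → ℝ} (h : WgPF a F) : WgPC a (fun x => Polynomial.C (F x)) := by
  intro j
  rcases Nat.eq_zero_or_pos j with rfl | hj
  · simpa using h
  · simp only [Polynomial.coeff_C, hj.ne', if_false]
    exact WgPF.const _ _

lemma WgPC.mul {a b : ℕ} {F G : (Fin n → ℝ) → ℝ[X]} (h : WgPC a F) (h' : WgPC b G) : WgPC (a + b) (fun x => F x * G x) := by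
  intro j
  simp only [Polynomial.coeff_mul]
  exact WgPF.sum _ fun p _ => (h p.1).mul (h' p.2)

lemma WgPC.sub {a : ℕ} {F G : (Fin n → ℝ) → ℝ[X]} (h : WgPC a F) (h' : WgPC a G) : WgPC a (fun x => F x - G x) := by
  intro j
  simp only [Polynomial.coeff_sub]
  exact (h j).sub (h' j)

lemma WgPC.sum {a : ℕ} {ι : Type*} (s : Finset ι) {F : ι → (Fin n → ℝ) → ℝ[X]} (h : ∀ i ∈ s, WgPC a (F i)) :
    WgPC a (fun x => ∑ i ∈ s, F i x) := by
  intro j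
  simp only [Polynomial.finsetSum_coeff]
  exact WgPF.sum _ fun i hi => h i hi j

lemma WgPC.prod {a : ℕ} {ι : Type*} (s : Finset ι) {F : ι → (Fin n → ℝ) → ℝ[X]} (h : ∀ i ∈ s, WgPC a (F i)) :
    WgPC (s.card * a) (fun x => ∏ i ∈ s, F i x) := by
  classical
  induction s using Finset.induction_on with
  | empty => simpa using WgPC.const _ 1
  | insert i s hi ih =>
    simp only [Finset.prod_insert hi, Finset.card_insert_of_notMem hi]
    exact ((h i (by simp)).mul (ih fun j hj => h j (by simp [hj]))).mono (by ring_nf; rfl)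

lemma WgPC.pow {a : ℕ} {F : (Fin n → ℝ) → ℝ[X]} (h : WgPC a F) (k : ℕ) : WgPC (a * k) (fun x => F x ^ k) := by
  induction k with
  | zero => simpa using WgPC.const _ 1
  | succ k ih => simp only [pow_succ]; exact ih.mul h

lemma WgPC.deriv {a : ℕ} {F : (Fin n → ℝ) → ℝ[X]} (h : WgPC a F) : WgPC a (fun x => derivative (F x)) := by
  intro j
  simp only [coeff_derivative, mul_comm]
  exact (h (j+1)).smul _

lemma WgPC.P {s t : ℕ} {f : (Fin n → ℝ) → Fin s → ℝ[X]} (h : ∀ i, WgPC t (fun x => f x i)) (p) :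
    WgPC (2 * t) (fun x => wgP (f x) p) := by
  rcases p with ⟨i, _ | j⟩
  · exact (h i).mono (by omega)
  · exact ((h i).mul (h j)).deriv.mono (by omega)

lemma WgPF.E {a : ℕ} {P : (Fin n → ℝ) → ℝ[X]} (h : WgPC a P) (m i : ℕ) : WgPF (a * i) (fun x => wgE (P x) m i) := by
  unfold wgE
  split_ifs with h1 h2
  · exact WgPF.const _ _
  · refine ((h (m - i)).mul ((h m).pow (i - 1))).mono ?_
    obtain ⟨j, rfl⟩ : ∃ j, i = j + 1 := ⟨i - 1, by omega⟩
    simp; ring_nf; rfl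
  · exact WgPF.const _ _

lemma WgPF.Nw {a : ℕ} {e : (Fin n → ℝ) → ℕ → ℝ} (m : ℕ) (h : ∀ i, WgPF (a * i) (fun x => e x i)) (k : ℕ) :
    WgPF (a * k) (fun x => wgNw m (e x) k) := by
  induction k using Nat.strong_induction_on with
  | _ k ih =>
    have : ∀ x, wgNw m (e x) k = (m - k : ℝ) * e x k - ∑ l : Fin k, e x (k - l) * wgNw m (e x) l := by
      intro x; rw [wgNw]
    simp only [this]
    refine ((h k).smul _).sub (WgPF.sum _ fun l _ => ?_)
    refine ((h (k - l)).mul (ih l l.2)).mono ?_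
    rw [← mul_add, Nat.sub_add_cancel l.2.le]

lemma WgPC.S {a t N : ℕ} {c : (Fin n → ℝ) → ℝ} {f : (Fin n → ℝ) → ℝ[X]} (hc : WgPF a c) (hf : WgPC t f) :
    WgPC (t + a * N) (fun x => wgS (c x) N (f x)) := by
  unfold wgS
  refine WgPC.sum _ fun j _ => ?_
  have := (WgPC.ofC ((hf j).mul (hc.pow (N - j)))).mul (WgPC.const 0 (Polynomial.X ^ j))
  refine this.mono ?_
  have := Nat.mul_le_mul_left a (Nat.sub_le N j)
  omega

lemma WgPC.G {a t N s K : ℕ} {c : (Fin n → ℝ) → ℝ} {f : (Fin n → ℝ) → Fin s → ℝ[X]} (hc : WgPF a c)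
    (h : ∀ i, WgPC t (fun x => f x i)) (idx : Fin K → Fin s) (e : Fin K → Fin 3) :
    WgPC (K * ((t + a * N) * 2)) (fun x => wgG (c x) N (f x) idx e) := by
  unfold wgG
  have := WgPC.prod (n := n) (a := (t + a * N) * 2) (Finset.univ : Finset (Fin K)) (F := fun k x => (wgS (c x) N (f x (idx k))) ^ (e k : ℕ)) 
    (fun k _ => ((WgPC.S (N := N) hc (h (idx k))).pow (e k)).mono (Nat.mul_le_mul_left _ (by omega)))
  simpa using this

lemma WgPC.charpoly {a m : ℕ} {H : (Fin n → ℝ) → Matrix (Fin m) (Fin m) ℝ} (h : ∀ i j, WgPF a (fun x => H x i j)) :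
    WgPC (m * a) (fun x => (H x).charpoly) := by
  simp only [Matrix.charpoly, Matrix.det_apply']
  refine WgPC.sum _ fun σ _ => ?_
  have h1 : WgPC (n := n) (m * a) (fun x => ∏ i, (H x).charmatrix (σ i) i) := by
    have := WgPC.prod (n := n) (a := a) (Finset.univ : Finset (Fin m)) (F := fun i x => (H x).charmatrix (σ i) i) (by
      intro i _
      simp only [Matrix.charmatrix_apply]
      exact (WgPC.const _ _).sub (WgPC.ofC (h _ _)))
    simpa using this
  have := (WgPC.const 0 (((Equiv.Perm.sign σ : ℤˣ) : ℤ) : ℝ[X])).mul h1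
  rw [zero_add] at this
  exact this

lemma WgPF.H {s t : ℕ} {f : (Fin n → ℝ) → Fin s → ℝ[X]} (h : ∀ i, WgPC t (fun x => f x i)) (p) (m : ℕ) (hm : m ≤ 2 * t)
    (idx : Fin (2*t) → Fin s) (e : Fin (2*t) → Fin 3) (l : ℕ) :
    WgPF (92 * t^4) (fun x => (wgH (wgP (f x) p) m (2*t) (f x) idx e).charpoly.coeff l) := by
  have hP := WgPC.P h p
  have hG := WgPC.G (N := 2*t) (hP m) h idx e
  have hq := WgPF.Nw m (fun i => WgPF.E hP m i)
  have hent : ∀ i j, WgPF (32 * t^3 + 12 * t^2 + 2 * t) (fun x => wgH (wgP (f x) p) m (2*t) (f x) idx e i j) := by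
    intro i j
    simp only [wgH, wgHk, Matrix.of_apply]
    refine WgPF.sum _ fun k hk => ?_
    refine ((hG k).mul (hq (i + j + k))).mono ?_
    have hk' := Finset.mem_range.mp hk
    have h1 : (i + j + k : ℕ) ≤ 4 * t + 8 * t^2 + 1 := by
      have h2 := i.2
      have h3 := j.2
      have h4 : 2 * (2 * t) * (2 * t) = 8 * t^2 := by ring
      omega
    calc _ ≤ 2 * t * ((t + 2 * t * (2 * t)) * 2) + 2 * t * (4 * t + 8 * t^2 + 1) := by gcongr
      _ = _ := by ring
  refine ((WgPC.charpoly hent) l).mono ?_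
  calc m * (32 * t^3 + 12 * t^2 + 2 * t) ≤ (2 * t) * (32 * t^3 + 12 * t^2 + 2 * t) := by gcongr
    _ = 64 * t^4 + 24 * t^3 + 4 * t^2 := by ring
    _ ≤ 92 * t^4 := by
      rcases Nat.eq_zero_or_pos t with rfl | ht
      · simp
      · have h1 : t^3 ≤ t^4 := Nat.pow_le_pow_right ht (by omega)
        have h2 : t^2 ≤ t^4 := Nat.pow_le_pow_right ht (by omega)
        omega
end PFsec

section Iter

theorem wg_step {n T s : ℕ} (hT : 2 ≤ T) (hs : s ≤ 2 ^ T) (Q : Fin s → MvPolynomial (Fin (n+1)) ℝ)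
    (hQ : ∀ i, (Q i).totalDegree ≤ T) :
    ∃ (s' : ℕ) (Q' : Fin s' → MvPolynomial (Fin n) ℝ), s' ≤ 2 ^ (T ^ 11) ∧ (∀ i, (Q' i).totalDegree ≤ T ^ 11) ∧
      ∀ x x' : Fin n → ℝ, (∀ i, SignType.sign (eval x (Q' i)) = SignType.sign (eval x' (Q' i))) →
        ∀ v : ℝ, ∃ v' : ℝ, ∀ i, SignType.sign (eval (Fin.cons v' x' : Fin (n+1) → ℝ) (Q i)) =
          SignType.sign (eval (Fin.cons v x : Fin (n+1) → ℝ) (Q i)) := by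
  classical
  let f : (Fin n → ℝ) → Fin s → Polynomial ℝ := fun x i => Polynomial.map (eval x) (finSuccEquiv ℝ n (Q i))
  have hdeg : ∀ x i, (f x i).natDegree ≤ T := by
    intro x i
    refine Polynomial.natDegree_map_le.trans ?_
    rw [natDegree_finSuccEquiv]
    exact (degreeOf_le_totalDegree _ _).trans (hQ i)
  have hPC : ∀ i, WgPC T (fun x => f x i) := by
    intro i j
    refine ⟨(finSuccEquiv ℝ n (Q i)).coeff j, ?_, fun x => by simp [f]⟩
    by_cases h0 : (finSuccEquiv ℝ n (Q i)).coeff j = 0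
    · simp [h0]
    · have := totalDegree_coeff_finSuccEquiv_add_le (Q i) j h0
      have := hQ i
      omega
  have heval : ∀ x v i, (f x i).eval v = eval (Fin.cons v x : Fin (n+1) → ℝ) (Q i) := by
    intro x v i
    rw [eval_eq_eval_mv_eval']
  let K := Fin s × Option (Fin s)
  let I := (K × Fin (2*T+1)) ⊕ (K × Fin (2*T+1) × (Fin (2*T) → Fin s) × (Fin (2*T) → Fin 3) × Fin (2*T+1))
  let F : I → (Fin n → ℝ) → ℝ := fun a => match a with
    | Sum.inl q => fun x => (wgP (f x) q.1).coeff q.2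
    | Sum.inr q => fun x => (wgH (wgP (f x) q.1) q.2.1 (2*T) (f x) q.2.2.1 q.2.2.2.1).charpoly.coeff q.2.2.2.2
  have h92 : 92 * T^4 ≤ T^11 := by
    have : 2^7 ≤ T^7 := Nat.pow_le_pow_left hT 7
    calc 92 * T^4 ≤ T^7 * T^4 := by gcongr; omega
      _ = T^11 := by ring
  have h2T : 2 * T ≤ 92 * T^4 := by
    have : T^1 ≤ T^4 := Nat.pow_le_pow_right (by omega) (by omega)
    rw [pow_one] at this
    omega
  have hF : ∀ a, WgPF (T^11) (F a) := by
    rintro (q | q)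
    · exact (WgPC.P hPC q.1 q.2).mono (h2T.trans h92)
    · exact (WgPF.H hPC q.1 q.2.1 (by omega) q.2.2.1 q.2.2.2.1 q.2.2.2.2).mono h92
  choose Q' hQ'1 hQ'2 using hF
  let ε := Fintype.equivFin I
  refine ⟨Fintype.card I, fun i => Q' (ε.symm i), ?_, fun i => hQ'1 _, ?_⟩
  · have hc : Fintype.card I = (s * (s+1)) * (2*T+1) + (s * (s+1)) * ((2*T+1) * (s^(2*T) * (3^(2*T) * (2*T+1)))) := by
      simp [I, K]
    rw [hc]
    have e1 : 2*T+1 ≤ 2^(2*T) := by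
      have h : ∀ m, m + 1 ≤ 2^m := fun m => Nat.lt_two_pow_self
      exact h _
    have e2 : s * (s+1) ≤ 2^(2*T+1) := by
      have h1 : s + 1 ≤ 2^(T+1) := by
        have := Nat.one_le_two_pow (n := T)
        rw [pow_succ]; omega
      calc s * (s+1) ≤ 2^T * 2^(T+1) := Nat.mul_le_mul hs h1
        _ = _ := by rw [← pow_add]; congr 1; ring
    have e3 : s^(2*T) ≤ 2^(T*(2*T)) := by
      rw [pow_mul 2 T]; exact Nat.pow_le_pow_left hs _
    have e4 : 3^(2*T) ≤ 2^(2*(2*T)) := by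
      rw [pow_mul 2 2]; exact Nat.pow_le_pow_left (by norm_num) _
    calc _ ≤ 2^(2*T+1) * 2^(2*T) + 2^(2*T+1) * (2^(2*T) * (2^(T*(2*T)) * (2^(2*(2*T)) * 2^(2*T)))) := by gcongr
      _ ≤ 2^(2*T+1+2*T+T*(2*T)+2*(2*T)+2*T) + 2^(2*T+1+2*T+T*(2*T)+2*(2*T)+2*T) := by
        apply Nat.add_le_add
        · rw [← pow_add]; exact Nat.pow_le_pow_right (by norm_num) (by omega)
        · apply le_of_eq; simp only [← pow_add]; congr 1; ring
      _ = 2^(2*T^2 + 10 * T + 2) := by rw [← two_mul, ← pow_succ']; congr 1; ring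
      _ ≤ 2^(T^11) := by
        apply Nat.pow_le_pow_right (by norm_num)
        have h1 : T^2 ≤ T^4 := Nat.pow_le_pow_right (by omega) (by omega)
        have h2 : T^1 ≤ T^4 := Nat.pow_le_pow_right (by omega) (by omega)
        rw [pow_one] at h2
        omega
  · intro x x' hsign v
    have hs' : ∀ a, SignType.sign (F a x) = SignType.sign (F a x') := by
      intro a
      have := hsign (ε a)
      simp only [Equiv.symm_apply_apply, hQ'2] at this
      exact this
    have hsame : WgSame T (f x) (f x') :=
      { df := hdeg x
        df' := hdeg x'
        co := fun p j hj => hs' (Sum.inl (p, ⟨j, by omega⟩))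
        ch := fun p m hm idx e l hl => hs' (Sum.inr (p, ⟨m, by omega⟩, idx, e, ⟨l, by omega⟩)) }
    obtain ⟨v', hv'⟩ := wg_onevar hsame v
    refine ⟨v', fun i => ?_⟩
    rw [← heval, ← heval, hv']

def wgGl {n : ℕ} : (d : ℕ) → (Fin d → ℝ) → (Fin n → ℝ) → (Fin (n + d) → ℝ)
  | 0, _, x => x
  | d + 1, u, x => Fin.cons (u 0) (wgGl d (Fin.tail u) x)

lemma wgGl_idx (n d : ℕ) : ∃ (iv : Fin d → Fin (n + d)) (ix : Fin n → Fin (n + d)),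
    ∀ u x, (∀ j, wgGl d u x (iv j) = u j) ∧ (∀ i, wgGl d u x (ix i) = x i) := by
  induction d with
  | zero => exact ⟨Fin.elim0, id, fun u x => ⟨fun j => j.elim0, fun i => rfl⟩⟩
  | succ d ih =>
    obtain ⟨iv, ix, h⟩ := ih
    refine ⟨(Fin.cons 0 (fun j => (iv j).succ) : Fin (d+1) → Fin ((n+d)+1)), fun i => ((ix i).succ : Fin ((n+d)+1)), fun u x => ⟨fun j => ?_, fun i => ?_⟩⟩
    · refine Fin.cases ?_ (fun j => ?_) j
      · rfl
      · show (Fin.cons (u 0) (wgGl d (Fin.tail u) x) : Fin ((n+d)+1) → ℝ) (iv j).succ = _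
        rw [Fin.cons_succ, (h _ _).1]; rfl
    · show (Fin.cons (u 0) (wgGl d (Fin.tail u) x) : Fin ((n+d)+1) → ℝ) (ix i).succ = _
      rw [Fin.cons_succ, (h _ _).2]

theorem wg_iter (n d : ℕ) : ∀ {T s : ℕ} (_ : 2 ≤ T) (_ : s ≤ 2 ^ T) (Q : Fin s → MvPolynomial (Fin (n+d)) ℝ)
    (_ : ∀ i, (Q i).totalDegree ≤ T),
    ∃ (s' : ℕ) (Q' : Fin s' → MvPolynomial (Fin n) ℝ), s' ≤ 2 ^ (T ^ (11 ^ d)) ∧ (∀ i, (Q' i).totalDegree ≤ T ^ (11 ^ d)) ∧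
      ∀ x x' : Fin n → ℝ, (∀ i, SignType.sign (eval x (Q' i)) = SignType.sign (eval x' (Q' i))) →
        ∀ u : Fin d → ℝ, ∃ u' : Fin d → ℝ, ∀ i, SignType.sign (eval (wgGl d u' x') (Q i)) =
          SignType.sign (eval (wgGl d u x) (Q i)) := by
  induction d with
  | zero =>
    intro T s hT hs Q hQ
    exact ⟨s, Q, by simpa using hs, by simpa using hQ, fun x x' h u => ⟨u, fun i => (h i).symm⟩⟩
  | succ d ih =>
    intro T s hT hs Q hQ
    obtain ⟨s1, Q1, hs1, hQ1, h1⟩ := wg_step (n := n + d) hT hs Q hQ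
    have hT1 : 2 ≤ T ^ 11 := hT.trans (Nat.le_self_pow (by norm_num) T)
    obtain ⟨s2, Q2, hs2, hQ2, h2⟩ := ih hT1 hs1 Q1 hQ1
    have e : (T ^ 11) ^ (11 ^ d) = T ^ (11 ^ (d+1)) := by rw [← pow_mul, pow_succ']
    rw [e] at hs2
    simp only [e] at hQ2
    refine ⟨s2, Q2, hs2, hQ2, fun x x' h u => ?_⟩
    obtain ⟨w', hw'⟩ := h2 x x' h (Fin.tail u)
    obtain ⟨v', hv'⟩ := h1 (wgGl d (Fin.tail u) x) (wgGl d w' x') (fun i => (hw' i).symm) (u 0)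
    refine ⟨Fin.cons v' w', fun i => ?_⟩
    have := hv' i
    simp only [wgGl, Fin.cons_zero, Fin.tail_cons]
    exact this

lemma wg_linpoly {M d B : ℕ} (lam : (Fin M → ℝ) →ₗ[ℝ] MvPolynomial (Fin d) ℝ) (hB : ∀ x, (lam x).totalDegree ≤ B) :
    ∃ Q : MvPolynomial (Fin (M + d)) ℝ, Q.totalDegree ≤ B + 1 ∧ ∀ u x, eval (wgGl d u x) Q = eval u (lam x) := by
  classical
  obtain ⟨iv, ix, h⟩ := wgGl_idx M d
  refine ⟨∑ i, X (ix i) * rename iv (lam (Pi.single i 1)), ?_, fun u x => ?_⟩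
  · refine totalDegree_finsetSum_le fun i _ => ?_
    refine (totalDegree_mul _ _).trans ?_
    have h1 := totalDegree_rename_le iv (lam (Pi.single i 1))
    have h2 := hB (Pi.single i 1)
    have h3 : (X (ix i) : MvPolynomial (Fin (M+d)) ℝ).totalDegree = 1 := totalDegree_X _
    omega
  · have hx : lam x = ∑ i, x i • lam (Pi.single i 1) := by
      conv_lhs => rw [pi_eq_sum_univ' x]
      simp [map_sum]
    rw [hx, map_sum, map_sum]
    apply Finset.sum_congr rfl
    intro i _
    have h0 : wgGl d u x ∘ iv = u := funext (h u x).1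
    rw [map_mul, eval_X, eval_rename, h0, (h u x).2, smul_eval]

lemma wg_defined {M s : ℕ} (S : Set (Fin M → ℝ)) (Q : Fin s → MvPolynomial (Fin M) ℝ) (t : ℝ)
    (hQ : ∀ i, ((Q i).totalDegree : ℝ) ≤ t)
    (h : ∀ x x' : Fin M → ℝ, (∀ i, SignType.sign (eval x (Q i)) = SignType.sign (eval x' (Q i))) → x ∈ S → x' ∈ S) :
    DefinedByPolys S (s + s) t := by
  refine ⟨Fin.append Q Q, Fin.append (fun _ => true) (fun _ => false),
    fun P => ∃ y ∈ S, ∀ i, P i ↔ (if Fin.append (fun _ : Fin s => true) (fun _ : Fin s => false) i then eval y (Fin.append Q Q i) < 0 else eval y (Fin.append Q Q i) = 0), ?_, ?_⟩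
  · intro i
    refine Fin.addCases (fun j => ?_) (fun j => ?_) i
    · rw [Fin.append_left]; exact hQ j
    · rw [Fin.append_right]; exact hQ j
  · ext x
    constructor
    · intro hx
      exact ⟨x, hx, fun i => Iff.rfl⟩
    · rintro ⟨y, hy, hi⟩
      refine h y x (fun i => ?_) hy
      have h1 := hi (Fin.castAdd s i)
      have h2 := hi (Fin.natAdd s i)
      simp only [Fin.append_left, Fin.append_right, if_true] at h1 h2
      simp only [Bool.false_eq_true, if_false] at h2
      rcases lt_trichotomy (eval y (Q i)) 0 with h3 | h3 | h3
      · rw [sign_neg h3, sign_neg (h1.mpr h3)]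
      · rw [h3, h2.mpr h3]
      · have h4 : 0 < eval x (Q i) := by
          refine lt_of_le_of_ne (not_lt.mp fun h => absurd (h1.mp h) h3.not_gt) (fun h => h3.ne' (h2.mp h.symm))
        rw [sign_pos h3, sign_pos h4]
end Iter

lemma wg_choose (m d : ℕ) (hd : 1 ≤ d) : m < Nat.choose (m + d) d := by
  induction d, hd using Nat.le_induction with
  | base => simp
  | succ d _ ih =>
    rw [← add_assoc, Nat.choose_succ_succ]
    omega

/-- **Complexity of the incidence set `W_G`.** Fix `b, d ≥ 1` and a Boolean function `G`. A point
`x = (q_1,…,q_b)` of `𝕏 = (ℝ^{binom(b+d,d)})^b` is identified (via an injective linear map `ι`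
onto the polynomials of degree at most `b`) with the semi-algebraic set
`Z_{x,G} = {v : G(ι(q_1)(v) ≥ 0,…,ι(q_b)(v) ≥ 0)}`, and a point `y` of `𝕐_k = 𝕍_1 × ⋯ × 𝕍_k`
with the set `S_y = {u : P_1(u) > 0,…,P_k(u) > 0}`. Then, for `D = 2^{k/d} ≥ 2^b`, the set
`W_G = {(x,y) : Z_{x,G} ∩ S_y ≠ ∅}` is semi-algebraic (in any linear coordinate system on
`𝕏 × 𝕐_k`), defined by at most `e^{D^C}` polynomials, each of degree at most `D^{C·d}`,
where `C = C(b,d)`. -/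
theorem WG_semialgebraic_low_complexity (b d : ℕ) (hb : 1 ≤ b) (hd : 1 ≤ d) :
    ∃ C : ℝ, 0 < C ∧
      ∀ (k : ℕ), 1 ≤ k →
      ∀ D : ℝ, D = 2 ^ ((k : ℝ) / (d : ℝ)) → (2 : ℝ) ^ b ≤ D →
      -- identification of coefficient vectors with the polynomials of degree at most `b`
      ∀ ι : (Fin (Nat.choose (b + d) d) → ℝ) →ₗ[ℝ] MvPolynomial (Fin d) ℝ,
        Function.Injective ι →
        Set.range ι = {p : MvPolynomial (Fin d) ℝ | p.totalDegree ≤ b} →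
      -- `Dj j` is the least positive integer with `binom(Dj j + d, d) > 2^{j-1}`
      ∀ Dj : Fin k → ℕ,
        (∀ j : Fin k,
          IsLeast {m : ℕ | 0 < m ∧ 2 ^ (j : ℕ) < Nat.choose (m + d) d} (Dj j)) →
      -- the `2^{j-1}`-dimensional subspaces `𝕍_j` of polynomials of degree at most `Dj j`
      ∀ V : Fin k → Submodule ℝ (MvPolynomial (Fin d) ℝ),
        (∀ j, Module.finrank ℝ (V j) = 2 ^ (j : ℕ)) →
        (∀ j, ∀ p ∈ V j, p.totalDegree ≤ Dj j) →
      ∀ G : (Fin b → Prop) → Prop,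
      ∀ (M : ℕ)
        (e : ((Fin b → Fin (Nat.choose (b + d) d) → ℝ) × ((j : Fin k) → V j)) ≃ₗ[ℝ]
            (Fin M → ℝ)),
        ∃ L : ℕ, (L : ℝ) ≤ Real.exp (D ^ C) ∧
          DefinedByPolys
            ((⇑e) '' {xy : (Fin b → Fin (Nat.choose (b + d) d) → ℝ) × ((j : Fin k) → V j) |
              ({v : Fin d → ℝ | G fun i => 0 ≤ eval v (ι (xy.1 i))} ∩
               {u : Fin d → ℝ | ∀ j : Fin k,
                  0 < eval u ((xy.2 j : MvPolynomial (Fin d) ℝ))}).Nonempty})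
            L (D ^ (C * d)) := by
  refine ⟨3 * d * 11 ^ d, by positivity, ?_⟩
  intro k hk D hD hbD ι hι hιr Dj hDj V hV hVd G M e
  have hdR : (1:ℝ) ≤ d := by exact_mod_cast hd
  have hkR : (1:ℝ) ≤ k := by exact_mod_cast hk
  have hbk : b ≤ k := by
    rw [hD, ← Real.rpow_natCast, Real.rpow_le_rpow_left_iff (by norm_num)] at hbD
    have : (k:ℝ) / d ≤ k := div_le_self (by linarith) hdR
    exact_mod_cast hbD.trans this
  have hb2 : b + 1 ≤ 2 ^ (k + 1) := by
    have : k < 2 ^ k := Nat.lt_two_pow_self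
    rw [pow_succ]; omega
  have hDj2 : ∀ j, Dj j + 1 ≤ 2 ^ (k + 1) := by
    intro j
    have h1 : Dj j ≤ 2 ^ (j : ℕ) := (hDj j).2 ⟨by positivity, wg_choose _ _ hd⟩
    have h2 : 2 ^ (j : ℕ) ≤ 2 ^ k := Nat.pow_le_pow_right (by norm_num) j.2.le
    have := Nat.one_le_two_pow (n := k)
    rw [pow_succ]; omega
  have hA : ∀ i : Fin b, ∃ Q : MvPolynomial (Fin (M + d)) ℝ, Q.totalDegree ≤ 2 ^ (k + 1) ∧
      ∀ u x, eval (wgGl d u x) Q = eval u (ι ((e.symm x).1 i)) := by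
    intro i
    obtain ⟨Q, h1, h2⟩ := wg_linpoly (M := M) (B := b) (ι ∘ₗ (LinearMap.proj i) ∘ₗ (LinearMap.fst ℝ _ _) ∘ₗ e.symm.toLinearMap) (by
      intro x
      have : ι ((e.symm x).1 i) ∈ Set.range ι := ⟨_, rfl⟩
      rw [hιr] at this
      exact this)
    exact ⟨Q, h1.trans hb2, h2⟩
  have hB : ∀ j : Fin k, ∃ Q : MvPolynomial (Fin (M + d)) ℝ, Q.totalDegree ≤ 2 ^ (k + 1) ∧
      ∀ u x, eval (wgGl d u x) Q = eval u ((e.symm x).2 j : MvPolynomial (Fin d) ℝ) := by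
    intro j
    obtain ⟨Q, h1, h2⟩ := wg_linpoly (M := M) (B := Dj j) ((V j).subtype ∘ₗ (LinearMap.proj j) ∘ₗ (LinearMap.snd ℝ (Fin b → Fin (Nat.choose (b + d) d) → ℝ) ((j : Fin k) → V j)) ∘ₗ e.symm.toLinearMap) (by
      intro x
      exact hVd j _ ((e.symm x).2 j).2)
    exact ⟨Q, h1.trans (hDj2 j), h2⟩
  choose QA hQA1 hQA2 using hA
  choose QB hQB1 hQB2 using hB
  have hT : 2 ≤ 2 ^ (k + 1) := by
    have := Nat.one_le_two_pow (n := k)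
    rw [pow_succ]; omega
  have hs0 : b + k ≤ 2 ^ (2 ^ (k + 1)) := by
    have h1 : k < 2 ^ k := Nat.lt_two_pow_self
    have h2 : 2 ^ (k + 1) < 2 ^ (2 ^ (k + 1)) := Nat.lt_two_pow_self
    rw [pow_succ 2 k] at h2 ⊢; omega
  obtain ⟨s', Q', hs', hQ', hsig⟩ := wg_iter M d hT hs0 (Fin.append QA QB) (by
    intro i
    refine Fin.addCases (fun j => ?_) (fun j => ?_) i
    · rw [Fin.append_left]; exact hQA1 j
    · rw [Fin.append_right]; exact hQB1 j)
  set T : ℕ := (2 ^ (k + 1)) ^ (11 ^ d) with hTdef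
  have hD1 : 1 ≤ D := le_trans (one_le_pow₀ (by norm_num)) hbD
  have hbound : (1 + T : ℝ) ≤ D ^ (3 * d * 11 ^ d : ℝ) := by
    have h1 : 1 + T ≤ 2 ^ ((k+1) * 11 ^ d + 1) := by
      rw [pow_succ, pow_mul, ← hTdef]
      have : 1 ≤ T := Nat.one_le_pow _ _ (by positivity)
      omega
    have h2 : (1 + T : ℝ) ≤ 2 ^ ((k+1) * 11 ^ d + 1) := by exact_mod_cast h1
    refine h2.trans ?_
    rw [hD, ← Real.rpow_mul (by norm_num), ← Real.rpow_natCast]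
    apply Real.rpow_le_rpow_of_exponent_le (by norm_num)
    have h3 : (k:ℝ) / d * (3 * d * 11 ^ d) = 3 * k * 11 ^ d := by
      field_simp
    rw [h3]
    push_cast
    have h4 : (1:ℝ) ≤ 11 ^ d := one_le_pow₀ (by norm_num)
    nlinarith [mul_le_mul hkR h4 (by norm_num) (by linarith)]
  refine ⟨s' + s', ?_, ?_⟩
  · have h1 : s' + s' ≤ 2 ^ (T + 1) := by rw [pow_succ]; omega
    have h2 : ((s' + s' : ℕ) : ℝ) ≤ 2 ^ (T + 1) := by exact_mod_cast h1
    refine h2.trans ?_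
    have h3 : (2:ℝ) ^ (T + 1) ≤ Real.exp 1 ^ (T + 1) := by
      apply pow_le_pow_left₀ (by norm_num)
      have := Real.add_one_le_exp 1
      linarith
    refine h3.trans ?_
    rw [← Real.exp_nat_mul, Real.exp_le_exp]
    push_cast
    linarith
  · apply wg_defined _ Q'
    · intro i
      have h1 : ((Q' i).totalDegree : ℝ) ≤ T := by exact_mod_cast hQ' i
      have h2 : D ^ (3 * d * 11 ^ d : ℝ) ≤ D ^ ((3 * d * 11 ^ d : ℝ) * d) := by
        apply Real.rpow_le_rpow_of_exponent_le hD1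
        exact le_mul_of_one_le_right (by positivity) hdR
      linarith
    · rintro x x' hxx ⟨xy, ⟨u, hu1, hu2⟩, rfl⟩
      obtain ⟨u', hu'⟩ := hsig _ x' hxx u
      refine ⟨e.symm x', ⟨u', ?_, ?_⟩, by simp⟩
      · have hh : (fun i => 0 ≤ eval u' (ι ((e.symm x').1 i))) = (fun i => 0 ≤ eval u (ι (xy.1 i))) := by
          funext i
          have := hu' (Fin.castAdd k i)
          rw [Fin.append_left, hQA2, hQA2, e.symm_apply_apply] at this
          rw [← sign_nonneg_iff, this, sign_nonneg_iff]
        show G (fun i => 0 ≤ eval u' (ι ((e.symm x').1 i)))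
        rw [hh]; exact hu1
      · intro j
        have := hu' (Fin.natAdd b j)
        rw [Fin.append_right, hQB2, hQB2, e.symm_apply_apply] at this
        have h3 := hu2 j
        rw [← sign_eq_one_iff, this, sign_eq_one_iff]
        exact h3
end
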